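/- arXiv:1305.4714 — 2 statements merged into one kernel-verified Lean document; each statement's English description precedes it below -/
import Mathlib

section
/- (Theorem 6, high-energy asymptotics of the modified position) Assume Assumption C and fix T > 0 and (x₀,ξ₀) ∈ ℝ^d × ℝ^d with ξ₀ ≠ 0. Let (y,η) solve the Hamilton equations for k with y(0)=x₀, η(0)=ξ₀, and suppose |y(s)| ≥ c|s| − C for all s ∈ ℝ (with c, C > 0), so that x± = lim_{s→±∞} ( y(s) − ∇_ξΨ(s,η(s)) ) exist, where Ψ(t,ξ) = ∫₀ᵗ k(sξ,ξ) ds. For each λ ≥ 1, let (x_λ, ξ_λ) solve the Hamilton equations for p with x_λ(0)=x₀, ξ_λ(0)=λξ₀, and suppose there exist λ₀ ≥ 1 and c', C', M > 0 such that |x_λ(s)| ≥ c'λ|s| − C' and |ξ_λ(s)| ≤ Mλ for all |s| ≤ T and λ ≥ λ₀. Then for every t with 0 < t ≤ T, lim_{λ→∞} ( x_λ(t) − ∇_ξΦ(t, ξ_λ(t)) ) = x₊, and for every t with −T ≤ t < 0 the same limit equals x₋. -/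
open Filter MeasureTheory
open scoped Topology BigOperators

noncomputable section

abbrev E (d : ℕ) := EuclideanSpace ℝ (Fin d)

/-- Japanese bracket `⟨x⟩ = (1+|x|²)^{1/2}`. -/
def jap {d : ℕ} (x : E d) : ℝ := Real.sqrt (1 + ‖x‖ ^ 2)

/-- Japanese bracket of a real number. -/
def japr (t : ℝ) : ℝ := Real.sqrt (1 + t ^ 2)

/-- The kinetic energy symbol `k(x,ξ) = (1/2) Σ a_{mn}(x) ξ_m ξ_n`. -/
def kk {d : ℕ} (a : Fin d → Fin d → E d → ℝ) (x ξ : E d) : ℝ :=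
  (1 / 2) * ∑ m : Fin d, ∑ n : Fin d, a m n x * ξ m * ξ n

/-- `(y, η)` solves the Hamilton equations for the Hamiltonian `h`. -/
def IsHamiltonSol {d : ℕ} (h : E d → E d → ℝ) (y η : ℝ → E d) : Prop :=
  ∀ t : ℝ, HasDerivAt y (gradient (h (y t)) (η t)) t ∧
    HasDerivAt η (-gradient (fun x => h x (η t)) (y t)) t

/-- Assumption C (with long range exponent `μ` and short range exponent `ν`). -/
def AssumptionC {d : ℕ} (μ ν : ℝ) (a : Fin d → Fin d → E d → ℝ) (VL VS : E d → ℝ) : Prop :=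
  (∀ m n, ContDiff ℝ (⊤ : ℕ∞) (a m n)) ∧
  (∀ m n x, a m n x = a n m x) ∧
  (∀ (x ξ : E d), ξ ≠ 0 → 0 < ∑ m : Fin d, ∑ n : Fin d, a m n x * ξ m * ξ n) ∧
  (∀ m n (j : ℕ), ∃ C > 0, ∀ x : E d,
    ‖iteratedFDeriv ℝ j (fun z => a m n z - if m = n then (1 : ℝ) else 0) x‖
      ≤ C * jap x ^ (-μ - (j : ℝ))) ∧
  ContDiff ℝ (⊤ : ℕ∞) VL ∧ ContDiff ℝ (⊤ : ℕ∞) VS ∧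
  (∀ j : ℕ, ∃ C > 0, ∀ x : E d,
    ‖iteratedFDeriv ℝ j VL x‖ ≤ C * jap x ^ (2 - μ - (j : ℝ))) ∧
  (∀ j : ℕ, ∃ C > 0, ∀ x : E d,
    ‖iteratedFDeriv ℝ j VS x‖ ≤ C * jap x ^ (2 - ν - (j : ℝ)))

/-- `Ψ(t,ξ) = ∫₀ᵗ k(sξ, ξ) ds`. -/
def Psi {d : ℕ} (a : Fin d → Fin d → E d → ℝ) (t : ℝ) (ξ : E d) : ℝ :=
  ∫ s in (0 : ℝ)..t, kk a (s • ξ) ξ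

/-- The Dollard type phase `Φ(t,ξ) = ∫₀ᵗ ( k(sξ,ξ) + V^{(L)}(sξ) ) ds`. -/
def Phi {d : ℕ} (a : Fin d → Fin d → E d → ℝ) (VL : E d → ℝ) (t : ℝ) (ξ : E d) : ℝ :=
  ∫ s in (0 : ℝ)..t, (kk a (s • ξ) ξ + VL (s • ξ))


section helpers

theorem aux_hasFDerivAt_integral {H F : Type*} [NormedAddCommGroup H] [NormedSpace ℝ H]
    [ProperSpace H] [NormedAddCommGroup F] [NormedSpace ℝ F]
    (ψ : H → ℝ → F) (ψ' : H → ℝ → H →L[ℝ] F) (a b : ℝ)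
    (h1 : Continuous (Function.uncurry ψ)) (h2 : Continuous (Function.uncurry ψ'))
    (h3 : ∀ x u, HasFDerivAt (fun x => ψ x u) (ψ' x u) x) (x : H) :
    HasFDerivAt (fun x => ∫ u in a..b, ψ x u) (∫ u in a..b, ψ' x u) x := by
  have hc : IsCompact (Metric.closedBall x 1 ×ˢ Set.uIcc a b) :=
    (isCompact_closedBall x 1).prod isCompact_uIcc
  obtain ⟨K, hK⟩ := hc.exists_bound_of_continuousOn (f := Function.uncurry ψ') h2.continuousOn
  have hc1 : ∀ x, Continuous (ψ x) := fun x => h1.comp (by fun_prop : Continuous fun u => (x, u))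
  have hc2 : ∀ x, Continuous (ψ' x) := fun x => h2.comp (by fun_prop : Continuous fun u => (x, u))
  refine intervalIntegral.hasFDerivAt_integral_of_dominated_of_fderiv_le
    (s := Metric.closedBall x 1) (bound := fun _ => K)
    (Metric.closedBall_mem_nhds x one_pos) ?_ ?_ ?_ ?_ ?_ ?_
  · exact Eventually.of_forall fun x => (hc1 x).aestronglyMeasurable
  · exact (hc1 x).intervalIntegrable _ _
  · exact (hc2 x).aestronglyMeasurable
  · refine Eventually.of_forall fun t ht z hz => ?_
    exact hK (z, t) ⟨hz, Set.uIoc_subset_uIcc ht⟩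
  · exact intervalIntegrable_const
  · exact Eventually.of_forall fun t ht z hz => h3 z t

theorem aux_hasDerivAt_integral {F : Type*} [NormedAddCommGroup F] [NormedSpace ℝ F]
    (ψ : ℝ → ℝ → F) (ψ' : ℝ → ℝ → F) (a b : ℝ)
    (h1 : Continuous (Function.uncurry ψ)) (h2 : Continuous (Function.uncurry ψ'))
    (h3 : ∀ x u, HasDerivAt (fun x => ψ x u) (ψ' x u) x) (x : ℝ) :
    HasDerivAt (fun x => ∫ u in a..b, ψ x u) (∫ u in a..b, ψ' x u) x := by
  have hc : IsCompact (Metric.closedBall x 1 ×ˢ Set.uIcc a b) :=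
    (isCompact_closedBall x 1).prod isCompact_uIcc
  obtain ⟨K, hK⟩ := hc.exists_bound_of_continuousOn (f := Function.uncurry ψ') h2.continuousOn
  have hc1 : ∀ x, Continuous (ψ x) := fun x => h1.comp (by fun_prop : Continuous fun u => (x, u))
  have hc2 : ∀ x, Continuous (ψ' x) := fun x => h2.comp (by fun_prop : Continuous fun u => (x, u))
  refine (intervalIntegral.hasDerivAt_integral_of_dominated_loc_of_deriv_le
    (s := Metric.closedBall x 1) (bound := fun _ => K)
    (Metric.closedBall_mem_nhds x one_pos) ?_ ?_ ?_ ?_ ?_ ?_).2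
  · exact Eventually.of_forall fun x => (hc1 x).aestronglyMeasurable
  · exact (hc1 x).intervalIntegrable _ _
  · exact (hc2 x).aestronglyMeasurable
  · refine Eventually.of_forall fun t ht z hz => ?_
    exact hK (z, t) ⟨hz, Set.uIoc_subset_uIcc ht⟩
  · exact intervalIntegrable_const
  · exact Eventually.of_forall fun t ht z hz => h3 z t

variable {d : ℕ}

theorem jap_one_le (x : E d) : 1 ≤ jap x := by
  unfold jap; apply Real.one_le_sqrt.2; nlinarith [sq_nonneg ‖x‖]

theorem jap_pos (x : E d) : 0 < jap x := lt_of_lt_of_le one_pos (jap_one_le x)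

theorem norm_le_jap (x : E d) : ‖x‖ ≤ jap x := by
  unfold jap; apply Real.le_sqrt_of_sq_le; linarith

theorem jap_le (x : E d) : jap x ≤ 1 + ‖x‖ := by
  unfold jap; apply Real.sqrt_le_iff.2; constructor
  · positivity
  · nlinarith [norm_nonneg x]

/-- comparison: if `c * s ≤ j`, then `j^(-e) ≤ (1+1/c)^4 * s^(-e)` for `0 ≤ e ≤ 4`. -/
theorem rpow_neg_le {c s j e : ℝ} (hc : 0 < c) (hs : 0 < s) (h : c * s ≤ j) (he : 0 ≤ e)
    (he4 : e ≤ 4) : j ^ (-e) ≤ (1 + 1 / c) ^ (4 : ℝ) * s ^ (-e) := by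
  have h1 : j ^ (-e) ≤ (c * s) ^ (-e) :=
    Real.rpow_le_rpow_of_nonpos (by positivity) h (by linarith)
  rw [Real.mul_rpow hc.le hs.le] at h1
  refine h1.trans (mul_le_mul_of_nonneg_right ?_ (by positivity))
  have h2 : c ^ (-e) = (1 / c) ^ e := by
    rw [Real.rpow_neg hc.le, one_div, Real.inv_rpow hc.le]
  rw [h2]
  have h3 : (1 / c) ^ e ≤ (1 + 1 / c) ^ e :=
    Real.rpow_le_rpow (by positivity) (by linarith) he
  refine h3.trans (Real.rpow_le_rpow_of_exponent_le ?_ he4)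
  have : 0 < 1 / c := by positivity
  linarith

/-- the antiderivative bound -/
theorem norm_sub_le_of_deriv_rpow {F : Type*} [NormedAddCommGroup F] [NormedSpace ℝ F]
    (w w' : ℝ → F) (A e s0 a b : ℝ) (ha : 0 < s0 + a) (he : e ≠ 1)
    (hw : ∀ s, HasDerivAt w (w' s) s)
    (hb : ∀ s, a ≤ s → s ≤ b → ‖w' s‖ ≤ A * (s0 + s) ^ (-e)) (s : ℝ) (h1 : a ≤ s) (h2 : s ≤ b) :
    ‖w s - w a‖ ≤ A * (((s0 + s) ^ (1 - e) - (s0 + a) ^ (1 - e)) / (1 - e)) := by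
  have hne : 1 - e ≠ 0 := sub_ne_zero.2 he.symm
  have key := image_norm_le_of_norm_deriv_right_le_deriv_boundary' (a := a) (b := b)
    (f := fun s => w s - w a) (f' := w')
    (B := fun s => A * (((s0 + s) ^ (1 - e) - (s0 + a) ^ (1 - e)) / (1 - e)))
    (B' := fun s => A * (s0 + s) ^ (-e))
    (fun s _ => ((hw s).sub_const _).continuousAt.continuousWithinAt)
    (fun s _ => ((hw s).sub_const _).hasDerivWithinAt)
    (by simp)
  have hd : ∀ s, a ≤ s → HasDerivAt (fun s => A * (((s0 + s) ^ (1 - e) - (s0 + a) ^ (1 - e)) / (1 - e)))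
      (A * (s0 + s) ^ (-e)) s := by
    intro s hs
    have h0 : HasDerivAt (fun s : ℝ => s0 + s) 1 s := (hasDerivAt_id s).const_add s0
    have h3 := ((((h0.rpow_const (p := 1 - e) (Or.inl (by linarith))).sub_const
      ((s0 + a) ^ (1 - e))).div_const (1 - e))).const_mul A
    refine h3.congr_deriv ?_
    rw [show 1 - e - 1 = -e by ring]
    field_simp
  exact key (fun s hs => (hd s hs.1).continuousAt.continuousWithinAt)
    (fun s hs => (hd s hs.1).hasDerivWithinAt) (fun s hs => hb s hs.1 hs.2.le) ⟨h1, h2⟩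

end helpers


theorem G_deriv {d : ℕ} (P Q : E d × E d → E d) (hP : ContDiff ℝ 1 P) (hQ : ContDiff ℝ 1 Q)
    (η η' : ℝ → E d) (hη : ∀ s, HasDerivAt η (η' s) s) (hη' : Continuous η') (τ : ℝ) :
    HasDerivAt (fun τ => τ • ∫ u in (0:ℝ)..1,
        (P ((u * τ) • η τ, η τ) + (u * τ) • Q ((u * τ) • η τ, η τ)))
      ((P (τ • η τ, η τ) + τ • Q (τ • η τ, η τ)) + τ • ∫ u in (0:ℝ)..1,
        (fderiv ℝ P ((u * τ) • η τ, η τ) ((u * τ) • η' τ, η' τ)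
          + (u * τ) • fderiv ℝ Q ((u * τ) • η τ, η τ) ((u * τ) • η' τ, η' τ))) τ := by
  have hηc : Continuous η := continuous_iff_continuousAt.2 fun s => (hη s).continuousAt
  have hPc := hP.continuous
  have hQc := hQ.continuous
  have hP'c : Continuous (fderiv ℝ P) := hP.continuous_fderiv one_ne_zero
  have hQ'c : Continuous (fderiv ℝ Q) := hQ.continuous_fderiv one_ne_zero
  have hPd : ∀ z, HasFDerivAt P (fderiv ℝ P z) z := fun z =>
    (hP.differentiable one_ne_zero z).hasFDerivAt
  have hQd : ∀ z, HasFDerivAt Q (fderiv ℝ Q z) z := fun z =>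
    (hQ.differentiable one_ne_zero z).hasFDerivAt
  -- curve derivative in `s`
  have hcurve : ∀ s u : ℝ, HasDerivAt (fun s => ((u * s) • η s, η s))
      (u • η s + (u * s) • η' s, η' s) s := by
    intro s u
    have h1 : HasDerivAt (fun s => u * s) u s := by
      simpa using (hasDerivAt_id s).const_mul u
    have h2 := h1.smul (hη s)
    refine (h2.prodMk (hη s)).congr_deriv ?_
    simp [add_comm]
  have hcurveu : ∀ s u : ℝ, HasDerivAt (fun u => ((u * s) • η s, η s))
      (s • η s, (0 : E d)) u := by
    intro s u
    have h1 : HasDerivAt (fun u => u * s) s u := by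
      simpa using (hasDerivAt_id u).mul_const s
    exact ((h1.smul_const (η s)).prodMk (hasDerivAt_const u (η s)))
  set φ : ℝ → ℝ → E d := fun s u =>
    P ((u * s) • η s, η s) + (u * s) • Q ((u * s) • η s, η s) with hφ
  set φ' : ℝ → ℝ → E d := fun s u =>
    fderiv ℝ P ((u * s) • η s, η s) (u • η s + (u * s) • η' s, η' s)
     + ((u * s) • fderiv ℝ Q ((u * s) • η s, η s) (u • η s + (u * s) • η' s, η' s)
        + u • Q ((u * s) • η s, η s)) with hφ'
  have hd1 : ∀ s u, HasDerivAt (fun s => φ s u) (φ' s u) s := by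
    intro s u
    have h1 : HasDerivAt (fun s => u * s) u s := by
      simpa using (hasDerivAt_id s).const_mul u
    have h2 := (hPd ((u * s) • η s, η s)).comp_hasDerivAt s (hcurve s u)
    have h3 := (hQd ((u * s) • η s, η s)).comp_hasDerivAt s (hcurve s u)
    exact h2.add (h1.smul h3)
  have hφc : Continuous (Function.uncurry φ) := by
    simp only [hφ, Function.uncurry_def]; fun_prop
  have hφ'c : Continuous (Function.uncurry φ') := by
    simp only [hφ', Function.uncurry_def]; fun_prop
  have hI := aux_hasDerivAt_integral φ φ' 0 1 hφc hφ'c hd1 τ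
  have hG := (hasDerivAt_id τ).smul hI
  refine hG.congr_deriv ?_
  simp only [id, one_smul]
  -- FTC
  set χ : ℝ → E d := fun u => fderiv ℝ P ((u * τ) • η τ, η τ) ((u * τ) • η' τ, η' τ)
          + (u * τ) • fderiv ℝ Q ((u * τ) • η τ, η τ) ((u * τ) • η' τ, η' τ) with hχ
  have hχc : Continuous χ := by simp only [hχ]; fun_prop
  have hc1 : Continuous (φ τ) := hφc.comp (by fun_prop : Continuous fun u => (τ, u))
  have hc2 : Continuous (φ' τ) := hφ'c.comp (by fun_prop : Continuous fun u => (τ, u))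
  have hftc : ∫ u in (0:ℝ)..1, (φ τ u + τ • φ' τ u - τ • χ u) = φ τ 1 := by
    have hD : ∀ u, HasDerivAt (fun u => u • φ τ u) (φ τ u + τ • φ' τ u - τ • χ u) u := by
      intro u
      have h1 : HasDerivAt (fun u => u * τ) τ u := by
        simpa using (hasDerivAt_id u).mul_const τ
      have h2 := (hPd ((u * τ) • η τ, η τ)).comp_hasDerivAt u (hcurveu τ u)
      have h3 := (hQd ((u * τ) • η τ, η τ)).comp_hasDerivAt u (hcurveu τ u)
      refine ((hasDerivAt_id u).smul (h2.add (h1.smul h3))).congr_deriv ?_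
      have e1 : ((u • η τ + (u * τ) • η' τ, η' τ) : E d × E d)
        = u • (η τ, 0) + ((u * τ) • η' τ, η' τ) := by simp
      have e2 : ((τ • η τ, 0) : E d × E d) = τ • (η τ, 0) := by simp
      simp only [hφ, hφ', hχ, e1, e2, map_add, map_smul, id, Function.comp]
      simp only [Pi.add_apply, Pi.smul_apply', Function.comp]
      module
    rw [intervalIntegral.integral_eq_sub_of_hasDerivAt (fun u _ => hD u)
      ((by fun_prop : Continuous fun u => φ τ u + τ • φ' τ u - τ • χ u).intervalIntegrable _ _)]
    simp
  have e3 : ∫ u in (0:ℝ)..1, (φ τ u + τ • φ' τ u - τ • χ u)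
      = (∫ u in (0:ℝ)..1, φ τ u) + τ • (∫ u in (0:ℝ)..1, φ' τ u) - τ • ∫ u in (0:ℝ)..1, χ u := by
    rw [intervalIntegral.integral_sub, intervalIntegral.integral_add,
      intervalIntegral.integral_smul, intervalIntegral.integral_smul]
    all_goals exact Continuous.intervalIntegrable (by fun_prop) _ _
  have e4 : φ τ 1 = P (τ • η τ, η τ) + τ • Q (τ • η τ, η τ) := by simp [hφ]
  rw [← e4, ← hftc, e3]
  abel


theorem seg_bound {d : ℕ} (F : E d × E d → E d) (hF : ContDiff ℝ 1 F) (x y ξ : E d) (k : ℝ)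
    (hk : 0 ≤ k)
    (h : ∀ z ∈ segment ℝ x y, ∀ v, ‖fderiv ℝ F (z, ξ) (v, 0)‖ ≤ k * ‖v‖) :
    ‖F (y, ξ) - F (x, ξ)‖ ≤ k * ‖y - x‖ := by
  have := Convex.norm_image_sub_le_of_norm_hasFDerivWithin_le (𝕜 := ℝ) (s := segment ℝ x y)
    (f := fun z => F (z, ξ)) (C := k) (x := x) (y := y)
    (f' := fun z => (fderiv ℝ F (z, ξ)).comp (ContinuousLinearMap.inl ℝ (E d) (E d)))
    ?_ ?_ (convex_segment x y) (left_mem_segment ℝ x y) (right_mem_segment ℝ x y)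
  · exact this
  · intro z _
    have h1 := (hF.differentiable one_ne_zero (z, ξ)).hasFDerivAt
    exact (HasFDerivAt.comp z h1 (hasFDerivAt_prodMk_left z ξ)).hasFDerivWithinAt
  · intro z hz
    refine ContinuousLinearMap.opNorm_le_bound _ hk fun v => ?_
    simpa using h z hz v

theorem chi_bound {d : ℕ} (P Q : E d × E d → E d)
    (μ C c0 ρ M τ : ℝ) (hμ : 1 / 2 < μ) (hμ1 : μ < 1) (hC : 0 < C) (hc0 : 0 < c0) (hτ : 0 < τ)
    (hDP : ∀ x ξ, ‖x‖ ≤ ρ → ‖ξ‖ ≤ M → ∀ v w, ‖fderiv ℝ P (x, ξ) (v, w)‖ ≤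
      C * (jap x ^ (-(1 + μ)) * ‖v‖ + jap x ^ (-μ) * ‖w‖))
    (hDQ : ∀ x ξ, ‖x‖ ≤ ρ → ‖ξ‖ ≤ M → ∀ v w, ‖fderiv ℝ Q (x, ξ) (v, w)‖ ≤
      C * (jap x ^ (-(2 + μ)) * ‖v‖ + jap x ^ (-(1 + μ)) * ‖w‖))
    (ξ w : E d) (hξ : ‖ξ‖ ≤ M) (hξ0 : c0 ≤ ‖ξ‖) (hρ : τ * M ≤ ρ) :
    ‖∫ u in (0:ℝ)..1, (fderiv ℝ P ((u * τ) • ξ, ξ) ((u * τ) • w, w)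
          + (u * τ) • fderiv ℝ Q ((u * τ) • ξ, ξ) ((u * τ) • w, w))‖
      ≤ 4 * C * (1 + 1 / c0) ^ (4:ℝ) * τ ^ (-μ) * ‖w‖ / (1 - μ) := by
  set a0 := (1 + 1 / c0) ^ (4:ℝ) with ha0
  have ha0p : 0 < a0 := by positivity
  have hint : IntervalIntegrable (fun u : ℝ => 4 * C * a0 * τ ^ (-μ) * ‖w‖ * u ^ (-μ)) volume 0 1 :=
    (intervalIntegral.intervalIntegrable_rpow' (by linarith)).const_mul _
  have key := intervalIntegral.norm_integral_le_of_norm_le (μ := volume) (a := (0:ℝ)) (b := 1)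
    (f := fun u => (fderiv ℝ P ((u * τ) • ξ, ξ) ((u * τ) • w, w)
          + (u * τ) • fderiv ℝ Q ((u * τ) • ξ, ξ) ((u * τ) • w, w)))
    (g := fun u : ℝ => 4 * C * a0 * τ ^ (-μ) * ‖w‖ * u ^ (-μ)) zero_le_one ?_ hint
  · refine key.trans (le_of_eq ?_)
    rw [intervalIntegral.integral_const_mul, integral_rpow (Or.inl (by linarith))]
    rw [Real.zero_rpow (by linarith), Real.one_rpow, sub_zero,
      show -μ + 1 = 1 - μ by ring]
    ring
  · refine Eventually.of_forall fun u hu => ?_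
    obtain ⟨hu0, hu1⟩ := hu
    have hσ : 0 < u * τ := by positivity
    set σ := u * τ with hσd
    have hn : ‖σ • ξ‖ = σ * ‖ξ‖ := by rw [norm_smul, Real.norm_of_nonneg hσ.le]
    have hx : ‖σ • ξ‖ ≤ ρ := by
      rw [hn]
      have : σ ≤ τ := by rw [hσd]; nlinarith
      refine le_trans ?_ hρ
      have := norm_nonneg ξ
      gcongr
    have hj : c0 * σ ≤ jap (σ • ξ) := by
      refine le_trans ?_ (norm_le_jap _)
      rw [hn]; nlinarith
    have b0 := rpow_neg_le hc0 hσ hj (e := μ) (by linarith) (by linarith)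
    have b1 := rpow_neg_le hc0 hσ hj (e := 1 + μ) (by linarith) (by linarith)
    have b2 := rpow_neg_le hc0 hσ hj (e := 2 + μ) (by linarith) (by linarith)
    rw [← ha0] at b0 b1 b2
    set q := σ ^ (-μ) with hq
    have e1 : σ ^ (-(1 + μ)) = q / σ := by
      rw [show -(1 + μ) = -μ - 1 by ring, Real.rpow_sub_one hσ.ne']
    have e2 : σ ^ (-(2 + μ)) = q / σ / σ := by
      rw [show -(2 + μ) = -μ - 1 - 1 by ring, Real.rpow_sub_one hσ.ne', Real.rpow_sub_one hσ.ne']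
    rw [e1] at b1
    rw [e2] at b2
    have eq : q = u ^ (-μ) * τ ^ (-μ) := by rw [hq, hσd, Real.mul_rpow hu0.le hτ.le]
    have n1 := hDP (σ • ξ) ξ hx hξ (σ • w) w
    have n2 := hDQ (σ • ξ) ξ hx hξ (σ • w) w
    have hw : ‖σ • w‖ = σ * ‖w‖ := by rw [norm_smul, Real.norm_of_nonneg hσ.le]
    rw [hw] at n1 n2
    have hwn := norm_nonneg w
    have m1 : C * (jap (σ • ξ) ^ (-(1 + μ)) * (σ * ‖w‖) + jap (σ • ξ) ^ (-μ) * ‖w‖)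
       ≤ C * (a0 * (q / σ) * (σ * ‖w‖) + a0 * q * ‖w‖) := by gcongr
    have m2 : C * (jap (σ • ξ) ^ (-(2 + μ)) * (σ * ‖w‖) + jap (σ • ξ) ^ (-(1 + μ)) * ‖w‖)
       ≤ C * (a0 * (q / σ / σ) * (σ * ‖w‖) + a0 * (q / σ) * ‖w‖) := by gcongr
    calc _ ≤ _ := norm_add_le _ _
      _ ≤ C * (a0 * (q / σ) * (σ * ‖w‖) + a0 * q * ‖w‖)
          + σ * (C * (a0 * (q / σ / σ) * (σ * ‖w‖) + a0 * (q / σ) * ‖w‖)) := by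
        rw [norm_smul, Real.norm_of_nonneg hσ.le]
        have := n1.trans m1
        have := n2.trans m2
        gcongr
      _ = 4 * C * a0 * q * ‖w‖ := by field_simp; ring
      _ = _ := by rw [eq]; ring

set_option maxHeartbeats 4000000 in
theorem key_lemma {d : ℕ} (μ M C c1 K0 : ℝ) (hμ : 1 / 2 < μ) (hμ1 : μ < 1) (hC : 0 < C)
    (hc1 : 0 < c1) (hK0 : 0 ≤ K0) :
    ∃ R0 ≥ (1:ℝ), ∃ D ≥ (0:ℝ), ∀ (P Q : E d × E d → E d) (y η S : ℝ → E d) (L ρ : ℝ),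
      ContDiff ℝ 1 P → ContDiff ℝ 1 Q → Continuous S → L * M ≤ ρ → 0 < M →
      (∀ x ξ, ‖x‖ ≤ ρ → ‖ξ‖ ≤ M → ‖P (x, ξ)‖ ≤ C * jap x ^ (-μ)) →
      (∀ x ξ, ‖x‖ ≤ ρ → ‖ξ‖ ≤ M → ‖Q (x, ξ)‖ ≤ C * jap x ^ (-(1 + μ))) →
      (∀ x ξ, ‖x‖ ≤ ρ → ‖ξ‖ ≤ M → ∀ v w, ‖fderiv ℝ P (x, ξ) (v, w)‖ ≤
        C * (jap x ^ (-(1 + μ)) * ‖v‖ + jap x ^ (-μ) * ‖w‖)) →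
      (∀ x ξ, ‖x‖ ≤ ρ → ‖ξ‖ ≤ M → ∀ v w, ‖fderiv ℝ Q (x, ξ) (v, w)‖ ≤
        C * (jap x ^ (-(2 + μ)) * ‖v‖ + jap x ^ (-(1 + μ)) * ‖w‖)) →
      (∀ s, HasDerivAt y (η s + P (y s, η s)) s) →
      (∀ s, HasDerivAt η (-(Q (y s, η s) + S s)) s) →
      (∀ s, 0 ≤ s → s ≤ L → c1 * (1 + s) ≤ jap (y s) ∧ ‖y s‖ ≤ ρ ∧ ‖η s‖ ≤ M ∧
        ‖S s‖ ≤ C * jap (y s) ^ (-(1 + 2 * μ))) →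
      ‖y 0‖ ≤ K0 →
      ∀ r τ, R0 ≤ r → r ≤ τ → τ ≤ L →
        ‖(y τ - τ • η τ - τ • ∫ u in (0:ℝ)..1,
            (P ((u * τ) • η τ, η τ) + (u * τ) • Q ((u * τ) • η τ, η τ)))
          - (y r - r • η r - r • ∫ u in (0:ℝ)..1,
            (P ((u * r) • η r, η r) + (u * r) • Q ((u * r) • η r, η r)))‖
          ≤ D * r ^ (1 - 2 * μ) := by
  set a1 := (1 + 1 / c1) ^ (4:ℝ) with ha1
  have ha1p : 0 < a1 := by positivity
  set A1 := 3 * C * a1 with hA1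
  have hA1p : 0 < A1 := by positivity
  have hμ' : 0 < 1 - μ := by linarith
  set C4 := 2 * (K0 + A1 / (1 - μ)) with hC4
  have hC4p : 0 < C4 := by positivity
  set c0 := c1 / 2 with hc0
  have hc0p : 0 < c0 := by positivity
  set a0 := (1 + 1 / c0) ^ (4:ℝ) with ha0
  have ha0p : 0 < a0 := by positivity
  set D' := C * a0 * (2 * C4 + 1) + 4 * C * a0 / (1 - μ) * (2 * C * a0) with hD'
  have hD'p : 0 < D' := by positivity
  clear_value D' C4 a0 c0 A1 a1
  obtain ⟨R1, hR1⟩ : ∃ R1 : ℝ, ∀ τ ≥ R1, C4 * τ ^ (-μ) ≤ c1 / 4 := by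
    have h1 : Tendsto (fun τ : ℝ => C4 * τ ^ (-μ)) atTop (𝓝 (C4 * 0)) :=
      (tendsto_rpow_neg_atTop (by linarith)).const_mul C4
    rw [mul_zero] at h1
    exact eventually_atTop.1 (h1.eventually (ge_mem_nhds (by positivity)))
  refine ⟨max 1 (max R1 (4 / c1)), le_max_left _ _, D' / (2 * μ - 1),
    div_nonneg hD'p.le (by linarith), ?_⟩
  intro P Q y η S L ρ hP hQ hS hρ hM bP bQ bDP bDQ hy hη htr hy0
  have hyc : Continuous y := continuous_iff_continuousAt.2 fun s => (hy s).continuousAt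
  have hηc : Continuous η := continuous_iff_continuousAt.2 fun s => (hη s).continuousAt
  have hPc := hP.continuous
  have hQc := hQ.continuous
  -- step 1 : `y - τ η`
  have hV : ∀ s, HasDerivAt (fun s => y s - s • η s)
      (P (y s, η s) + s • (Q (y s, η s) + S s)) s := by
    intro s
    refine ((hy s).sub ((hasDerivAt_id s).smul (hη s))).congr_deriv ?_
    simp only [id, one_smul]
    module
  have step1 : ∀ s, 1 ≤ s → s ≤ L → ‖y s - s • η s‖ ≤ C4 * (s * s ^ (-μ)) := by
    intro s hs1 hsL
    have h := norm_sub_le_of_deriv_rpow (fun s => y s - s • η s)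
      (fun s => P (y s, η s) + s • (Q (y s, η s) + S s)) A1 μ 1 0 L (by norm_num) (by linarith)
      hV ?_ s (by linarith) hsL
    · simp only [zero_smul, sub_zero, add_zero, Real.one_rpow] at h
      have h2 : ‖y s - s • η s‖ ≤ K0 + A1 * (((1 + s) ^ (1 - μ) - 1) / (1 - μ)) := by
        calc ‖y s - s • η s‖ = ‖y 0 + (y s - s • η s - y 0)‖ := by congr 1; abel
          _ ≤ _ := (norm_add_le _ _).trans (add_le_add hy0 h)
      have h3 : (1:ℝ) ≤ (1 + s) ^ (1 - μ) := Real.one_le_rpow (by linarith) hμ'.le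
      have h4 : (1 + s) ^ (1 - μ) ≤ 2 * (s * s ^ (-μ)) := by
        have e : s * s ^ (-μ) = s ^ (1 - μ) := by
          rw [show (1 - μ) = -μ + 1 by ring, Real.rpow_add_one (by linarith), mul_comm]
        rw [e]
        calc (1 + s) ^ (1 - μ) ≤ (2 * s) ^ (1 - μ) :=
              Real.rpow_le_rpow (by linarith) (by linarith) hμ'.le
          _ = 2 ^ (1 - μ) * s ^ (1 - μ) := Real.mul_rpow (by norm_num) (by linarith)
          _ ≤ 2 ^ (1:ℝ) * s ^ (1 - μ) := by
              gcongr
              · norm_num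
              · linarith
          _ = _ := by rw [Real.rpow_one]
      have h5 : K0 + A1 * (((1 + s) ^ (1 - μ) - 1) / (1 - μ))
          ≤ (K0 + A1 / (1 - μ)) * (1 + s) ^ (1 - μ) := by
        have : A1 * (((1 + s) ^ (1 - μ) - 1) / (1 - μ)) = A1 / (1 - μ) * ((1 + s) ^ (1 - μ) - 1) := by
          ring
        rw [this]
        have : 0 ≤ A1 / (1 - μ) := by positivity
        have := mul_le_mul_of_nonneg_left h3 hK0
        linarith
      calc _ ≤ _ := h2.trans h5
        _ ≤ (K0 + A1 / (1 - μ)) * (2 * (s * s ^ (-μ))) := by gcongr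
        _ = _ := by rw [hC4]; ring
    · intro s hs0 hsL
      obtain ⟨t1, t2, t3, t4⟩ := htr s hs0 hsL
      have hs' : 0 < 1 + s := by linarith
      have b0 := rpow_neg_le hc1 hs' t1 (e := μ) (by linarith) (by linarith)
      have b1 := rpow_neg_le hc1 hs' t1 (e := 1 + μ) (by linarith) (by linarith)
      have b3 := rpow_neg_le hc1 hs' t1 (e := 1 + 2 * μ) (by linarith) (by linarith)
      rw [← ha1] at b0 b1 b3
      have b4 : (1 + s) ^ (-(1 + 2 * μ)) ≤ (1 + s) ^ (-(1 + μ)) :=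
        Real.rpow_le_rpow_of_exponent_le (by linarith) (by linarith)
      have e1 : (1 + s) ^ (-(1 + μ)) = (1 + s) ^ (-μ) / (1 + s) := by
        rw [show -(1 + μ) = -μ - 1 by ring, Real.rpow_sub_one hs'.ne']
      have n1 := bP _ _ t2 t3
      have n2 := bQ _ _ t2 t3
      set q := (1 + s) ^ (-μ) with hq
      have hqp : 0 < q := by positivity
      calc _ ≤ ‖P (y s, η s)‖ + ‖s • (Q (y s, η s) + S s)‖ := norm_add_le _ _
        _ ≤ C * (a1 * q) + s * (C * (a1 * (q / (1 + s))) + C * (a1 * (q / (1 + s)))) := by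
          rw [norm_smul, Real.norm_of_nonneg hs0]
          have k1 : ‖P (y s, η s)‖ ≤ C * (a1 * q) := n1.trans (by gcongr)
          have k2 : ‖Q (y s, η s)‖ ≤ C * (a1 * (q / (1 + s))) := by
            rw [← e1]; exact n2.trans (by gcongr)
          have k3 : ‖S s‖ ≤ C * (a1 * (q / (1 + s))) := by
            rw [← e1]; exact t4.trans (by gcongr; exact b3.trans (by gcongr))
          have k4 := (norm_add_le (Q (y s, η s)) (S s)).trans (add_le_add k2 k3)
          gcongr
        _ ≤ 3 * C * a1 * q := by
          have : s * (q / (1 + s)) ≤ q := by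
            rw [mul_div_assoc', div_le_iff₀ hs']; linarith
          have h' : 0 < C * a1 := by positivity
          have := mul_le_mul_of_nonneg_left this h'.le
          linarith
        _ = _ := by rw [hA1]
  -- derivative of w
  have hη'c : Continuous fun s => -(Q (y s, η s) + S s) := by fun_prop
  have hw := fun s => (hV s).sub (G_deriv P Q hP hQ η _ hη hη'c s)
  intro r τ hr hrτ hτL
  have hr1 : 1 ≤ r := (le_max_left _ _).trans hr
  have hfin := norm_sub_le_of_deriv_rpow _ _ D' (2 * μ) 0 r L (by linarith) (by linarith) hw
    ?_ τ hrτ hτL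
  · refine hfin.trans ?_
    rw [zero_add, zero_add]
    have h1 : 0 ≤ τ ^ (1 - 2 * μ) := by have : 0 ≤ τ := by linarith
                                        positivity
    have h2 : 0 < 2 * μ - 1 := by linarith
    have : D' * ((τ ^ (1 - 2 * μ) - r ^ (1 - 2 * μ)) / (1 - 2 * μ))
       = D' / (2 * μ - 1) * (r ^ (1 - 2 * μ) - τ ^ (1 - 2 * μ)) := by
      rw [show 1 - 2 * μ = -(2 * μ - 1) by ring, div_neg]
      ring
    rw [this]
    gcongr
    linarith
  · intro s hs hsL
    rw [zero_add]
    have hs1 : 1 ≤ s := hr1.trans hs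
    have hs0 : 0 < s := by linarith
    obtain ⟨t1, t2, t3, t4⟩ := htr s hs0.le hsL
    have hsR : C4 * s ^ (-μ) ≤ c1 / 4 :=
      hR1 s (((le_max_left _ _).trans (le_max_right _ _)).trans (hr.trans hs))
    have hs4 : 4 / c1 ≤ s :=
      ((le_max_right _ _).trans (le_max_right _ _)).trans (hr.trans hs)
    have hs4' : 1 ≤ c1 / 4 * s := by
      rw [div_le_iff₀ hc1] at hs4; linarith
    have hd := step1 s hs1 hsL
    set q := s ^ (-μ) with hq
    have hqp : 0 < q := by positivity
    have hd' : ‖y s - s • η s‖ ≤ c1 / 4 * s := hd.trans (by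
      have := mul_le_mul_of_nonneg_right hsR hs0.le
      linarith)
    have hyn : 3 * c1 / 4 * s ≤ ‖y s‖ := by
      have := jap_le (y s)
      linarith
    have hsn : ‖s • η s‖ = s * ‖η s‖ := by rw [norm_smul, Real.norm_of_nonneg hs0.le]
    have hseg : ∀ z ∈ segment ℝ (s • η s) (y s), c0 * s ≤ ‖z‖ ∧ ‖z‖ ≤ ρ := by
      intro z hz
      constructor
      · have h1 : ‖y s - z‖ ≤ ‖y s - s • η s‖ := by
          rw [← dist_eq_norm, ← dist_eq_norm, dist_comm (y s) (s • η s)]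
          have := dist_add_dist_of_mem_segment hz
          have := dist_nonneg (x := s • η s) (y := z)
          rw [dist_comm (y s) z]; linarith
        have h2 : ‖y s‖ ≤ ‖z‖ + ‖y s - z‖ := by
          simpa using norm_add_le z (y s - z)
        rw [hc0]; linarith
      · have hcv := (convex_closedBall (0 : E d) ρ).segment_subset (x := s • η s) (y := y s)
          ?_ ?_ hz
        · simpa using hcv
        · simp only [mem_closedBall_zero_iff, hsn]
          refine le_trans ?_ hρ
          exact mul_le_mul hsL t3 (norm_nonneg _) (by linarith)
        · simpa using t2
    have hηl : c0 ≤ ‖η s‖ := by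
      have h := (hseg _ (left_mem_segment ℝ _ _)).1
      rw [hsn, mul_comm] at h
      exact le_of_mul_le_mul_left h hs0
    have e1 : s ^ (-(1 + μ)) = q / s := by
      rw [show -(1 + μ) = -μ - 1 by ring, Real.rpow_sub_one hs0.ne']
    have e2 : s ^ (-(2 + μ)) = q / s / s := by
      rw [show -(2 + μ) = -μ - 1 - 1 by ring, Real.rpow_sub_one hs0.ne', Real.rpow_sub_one hs0.ne']
    have e3 : s ^ (-(1 + 2 * μ)) = q * q / s := by
      rw [show -(1 + 2 * μ) = (-μ + -μ) - 1 by ring, Real.rpow_sub_one hs0.ne',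
        Real.rpow_add hs0]
    have e4 : s ^ (-(2 * μ)) = q * q := by
      rw [show -(2 * μ) = (-μ + -μ) by ring, Real.rpow_add hs0]
    have T1 : ‖P (y s, η s) - P (s • η s, η s)‖ ≤ C * (a0 * (q / s)) * (C4 * (s * q)) := by
      refine (seg_bound P hP (s • η s) (y s) (η s) (C * (a0 * (q / s))) (by positivity) ?_).trans
        (by gcongr)
      intro z hz v
      obtain ⟨z1, z2⟩ := hseg z hz
      have b1 := rpow_neg_le hc0p hs0 (z1.trans (norm_le_jap z)) (e := 1 + μ)
        (by linarith) (by linarith)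
      rw [← ha0, e1] at b1
      refine (bDP z (η s) z2 t3 v 0).trans ?_
      rw [norm_zero, mul_zero, add_zero, ← mul_assoc]
      gcongr
    have T2 : ‖Q (y s, η s) - Q (s • η s, η s)‖ ≤ C * (a0 * (q / s / s)) * (C4 * (s * q)) := by
      refine (seg_bound Q hQ (s • η s) (y s) (η s) (C * (a0 * (q / s / s))) (by positivity) ?_).trans
        (by gcongr)
      intro z hz v
      obtain ⟨z1, z2⟩ := hseg z hz
      have b1 := rpow_neg_le hc0p hs0 (z1.trans (norm_le_jap z)) (e := 2 + μ)
        (by linarith) (by linarith)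
      rw [← ha0, e2] at b1
      refine (bDQ z (η s) z2 t3 v 0).trans ?_
      rw [norm_zero, mul_zero, add_zero, ← mul_assoc]
      gcongr
    have hyj : c0 * s ≤ jap (y s) := (hseg _ (right_mem_segment ℝ _ _)).1.trans (norm_le_jap _)
    have T3 : ‖S s‖ ≤ C * (a0 * (q * q / s)) := by
      have b1 := rpow_neg_le hc0p hs0 hyj (e := 1 + 2 * μ) (by linarith) (by linarith)
      rw [← ha0, e3] at b1
      exact t4.trans (by gcongr)
    have hq1 : q ≤ 1 := by
      rw [hq]; exact Real.rpow_le_one_of_one_le_of_nonpos hs1 (by linarith)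
    have T5 : ‖-(Q (y s, η s) + S s)‖ ≤ 2 * C * a0 * (q / s) := by
      have b1 := rpow_neg_le hc0p hs0 hyj (e := 1 + μ) (by linarith) (by linarith)
      rw [← ha0, e1] at b1
      have k1 : ‖Q (y s, η s)‖ ≤ C * (a0 * (q / s)) := (bQ _ _ t2 t3).trans (by gcongr)
      have k2 : C * (a0 * (q * q / s)) ≤ C * (a0 * (q / s)) := by
        gcongr; exact mul_le_of_le_one_left hqp.le hq1
      rw [norm_neg]
      refine (norm_add_le _ _).trans ?_
      linarith
    have T4 := chi_bound P Q μ C c0 ρ M s hμ hμ1 hC hc0p hs0 bDP bDQ (η s)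
      (-(Q (y s, η s) + S s)) t3 hηl (le_trans (by gcongr) hρ)
    rw [← ha0, ← hq] at T4
    set Y := ∫ u in (0:ℝ)..1, (fderiv ℝ P ((u * s) • η s, η s)
      ((u * s) • -(Q (y s, η s) + S s), -(Q (y s, η s) + S s))
          + (u * s) • fderiv ℝ Q ((u * s) • η s, η s)
          ((u * s) • -(Q (y s, η s) + S s), -(Q (y s, η s) + S s))) with hY
    have T6 : ‖Y‖ ≤ 4 * C * a0 * q * (2 * C * a0 * (q / s)) / (1 - μ) :=
      T4.trans (by gcongr)
    have eqn : P (y s, η s) + s • (Q (y s, η s) + S s)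
        - ((P (s • η s, η s) + s • Q (s • η s, η s)) + s • Y)
        = (P (y s, η s) - P (s • η s, η s)) + s • (Q (y s, η s) - Q (s • η s, η s))
          + s • S s - s • Y := by module
    rw [eqn, e4]
    have nsm : ∀ v : E d, ‖s • v‖ = s * ‖v‖ := fun v => by
      rw [norm_smul, Real.norm_of_nonneg hs0.le]
    calc _ ≤ ‖P (y s, η s) - P (s • η s, η s)‖ + ‖s • (Q (y s, η s) - Q (s • η s, η s))‖
          + ‖s • S s‖ + ‖s • Y‖ :=
          (norm_sub_le _ _).trans (add_le_add_left
            ((norm_add_le _ _).trans (add_le_add_left (norm_add_le _ _) _)) _)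
      _ ≤ C * (a0 * (q / s)) * (C4 * (s * q)) + s * (C * (a0 * (q / s / s)) * (C4 * (s * q)))
          + s * (C * (a0 * (q * q / s)))
          + s * (4 * C * a0 * q * (2 * C * a0 * (q / s)) / (1 - μ)) := by
        rw [nsm, nsm, nsm]; gcongr
      _ = D' * (q * q) := by rw [hD']; field_simp; ring


/-- perturbation coefficients -/
def bco {d : ℕ} (a : Fin d → Fin d → E d → ℝ) (m n : Fin d) (x : E d) : ℝ :=
  a m n x - if m = n then (1 : ℝ) else 0

def P0 {d : ℕ} (a : Fin d → Fin d → E d → ℝ) (z : E d × E d) : E d :=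
  ∑ m : Fin d, ∑ n : Fin d, (z.2 n) • (bco a m n z.1 • EuclideanSpace.single m (1:ℝ))

def Q0 {d : ℕ} (a : Fin d → Fin d → E d → ℝ) (z : E d × E d) : E d :=
  ∑ m : Fin d, ∑ n : Fin d, ((1 / 2) * (z.2 m * z.2 n)) • gradient (bco a m n) z.1

def SymB {d : ℕ} (e M : ℝ) (F : E d × E d → E d) : Prop :=
  ContDiff ℝ 1 F ∧ ∃ C > 0, ∀ x ξ, ‖ξ‖ ≤ M → ‖F (x, ξ)‖ ≤ C * jap x ^ (-e) ∧
    ∀ v w, ‖fderiv ℝ F (x, ξ) (v, w)‖ ≤ C * (jap x ^ (-(1 + e)) * ‖v‖ + jap x ^ (-e) * ‖w‖)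

theorem jap_rpow_pos {d : ℕ} (x : E d) (e : ℝ) : 0 < jap x ^ e :=
  Real.rpow_pos_of_pos (jap_pos x) e

theorem SymB.add {d : ℕ} {e M : ℝ} {F G : E d × E d → E d} (hF : SymB e M F) (hG : SymB e M G) :
    SymB e M (fun z => F z + G z) := by
  obtain ⟨f1, C1, hC1, f2⟩ := hF
  obtain ⟨g1, C2, hC2, g2⟩ := hG
  refine ⟨f1.add g1, C1 + C2, by positivity, fun x ξ h => ⟨?_, fun v w => ?_⟩⟩
  · rw [add_mul]
    exact (norm_add_le _ _).trans (add_le_add (f2 x ξ h).1 (g2 x ξ h).1)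
  · rw [fderiv_fun_add (f1.differentiable one_ne_zero _) (g1.differentiable one_ne_zero _), add_mul]
    exact (norm_add_le _ _).trans (add_le_add ((f2 x ξ h).2 v w) ((g2 x ξ h).2 v w))

theorem SymB.zero {d : ℕ} (e M : ℝ) : SymB (d := d) e M (fun _ => 0) := by
  refine ⟨contDiff_const, 1, one_pos, fun x ξ h => ⟨?_, fun v w => ?_⟩⟩
  · rw [norm_zero, one_mul]; exact (jap_rpow_pos x _).le
  · have h1 := (jap_rpow_pos x (-(1+e))).le
    have h2 := (jap_rpow_pos x (-e)).le
    simp only [fderiv_fun_const, Pi.zero_apply, zero_apply, norm_zero]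
    positivity

theorem SymB.sum {d : ℕ} {ι : Type*} {e M : ℝ} (s : Finset ι) (F : ι → E d × E d → E d)
    (hF : ∀ i, SymB e M (F i)) : SymB e M (fun z => ∑ i ∈ s, F i z) := by
  classical
  induction s using Finset.induction_on with
  | empty => simpa using SymB.zero e M
  | insert i s hi ih =>
    simp only [Finset.sum_insert hi]
    exact (hF i).add ih

theorem SymB.term {d : ℕ} {e M : ℝ} (l : E d → ℝ) (G : E d → E d) (hl : ContDiff ℝ 1 l)
    (hG : ContDiff ℝ 1 G) (C1 C2 : ℝ)
    (h1 : ∀ x, ‖G x‖ ≤ C1 * jap x ^ (-e)) (h2 : ∀ x, ‖fderiv ℝ G x‖ ≤ C2 * jap x ^ (-(1 + e))) :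
    SymB e M (fun z => l z.2 • G z.1) := by
  obtain ⟨k1, hk1⟩ := (isCompact_closedBall (0 : E d) M).exists_bound_of_continuousOn
    hl.continuous.continuousOn
  obtain ⟨k2, hk2⟩ := (isCompact_closedBall (0 : E d) M).exists_bound_of_continuousOn
    (hl.continuous_fderiv one_ne_zero).continuousOn
  set k := |k1| + |k2| + 1 with hk
  have hkp : 0 < k := by positivity
  set C := |C1| + |C2| + 1 with hC
  have hCp : 0 < C := by positivity
  refine ⟨(hl.comp contDiff_snd).smul (hG.comp contDiff_fst), k * C, by positivity,
    fun x ξ hξ => ?_⟩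
  have hξ' : ξ ∈ Metric.closedBall (0 : E d) M := by simpa using hξ
  have a1 : ‖l ξ‖ ≤ k := by
    have := hk1 ξ hξ'
    have := le_abs_self k1
    have := abs_nonneg k2
    rw [hk]; linarith
  have a2 : ‖fderiv ℝ l ξ‖ ≤ k := by
    have := hk2 ξ hξ'
    have := le_abs_self k2
    have := abs_nonneg k1
    rw [hk]; linarith
  have j1 := (jap_rpow_pos x (-e))
  have j2 := (jap_rpow_pos x (-(1 + e)))
  have b1 : ‖G x‖ ≤ C * jap x ^ (-e) := by
    refine (h1 x).trans ?_
    gcongr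
    have := le_abs_self C1
    have := abs_nonneg C2
    rw [hC]; linarith
  have b2 : ‖fderiv ℝ G x‖ ≤ C * jap x ^ (-(1 + e)) := by
    refine (h2 x).trans ?_
    gcongr
    have := le_abs_self C2
    have := abs_nonneg C1
    rw [hC]; linarith
  constructor
  · rw [norm_smul, mul_assoc]
    gcongr
  · intro v w
    have hd1 : HasFDerivAt (fun z : E d × E d => l z.2)
        ((fderiv ℝ l ξ).comp (ContinuousLinearMap.snd ℝ (E d) (E d))) (x, ξ) :=
      HasFDerivAt.comp (x, ξ) ((hl.differentiable one_ne_zero ξ).hasFDerivAt) hasFDerivAt_snd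
    have hd2 : HasFDerivAt (fun z : E d × E d => G z.1)
        ((fderiv ℝ G x).comp (ContinuousLinearMap.fst ℝ (E d) (E d))) (x, ξ) :=
      HasFDerivAt.comp (x, ξ) ((hG.differentiable one_ne_zero x).hasFDerivAt) hasFDerivAt_fst
    rw [(hd1.fun_smul hd2).fderiv]
    simp only [add_apply, smul_apply,
      ContinuousLinearMap.comp_apply, ContinuousLinearMap.coe_fst', ContinuousLinearMap.coe_snd',
      ContinuousLinearMap.smulRight_apply]
    have n1 : ‖fderiv ℝ G x v‖ ≤ C * jap x ^ (-(1 + e)) * ‖v‖ :=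
      (ContinuousLinearMap.le_opNorm _ _).trans (by gcongr)
    have n2 : ‖fderiv ℝ l ξ w‖ ≤ k * ‖w‖ :=
      (ContinuousLinearMap.le_opNorm _ _).trans (by gcongr)
    refine (norm_add_le _ _).trans ?_
    rw [norm_smul, norm_smul]
    calc _ ≤ k * (C * jap x ^ (-(1 + e)) * ‖v‖) + (k * ‖w‖) * (C * jap x ^ (-e)) := by gcongr
      _ = _ := by ring

theorem contDiff_gradient {d : ℕ} (f : E d → ℝ) (hf : ContDiff ℝ (⊤ : ℕ∞) f) :
    ContDiff ℝ 1 (gradient f) := by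
  have h : ContDiff ℝ 1 (fderiv ℝ f) := hf.fderiv_right (WithTop.coe_le_coe.2 le_top)
  exact (InnerProductSpace.toDual ℝ (E d)).symm.toContinuousLinearEquiv.contDiff.comp h

theorem norm_gradient_eq {d : ℕ} (f : E d → ℝ) (x : E d) :
    ‖gradient f x‖ = ‖iteratedFDeriv ℝ 1 f x‖ := by
  rw [norm_iteratedFDeriv_one]
  exact (InnerProductSpace.toDual ℝ (E d)).symm.norm_map _

theorem norm_fderiv_gradient_le {d : ℕ} (f : E d → ℝ) (x : E d) :
    ‖fderiv ℝ (gradient f) x‖ ≤ ‖iteratedFDeriv ℝ 2 f x‖ := by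
  have h1 : gradient f = (InnerProductSpace.toDual ℝ (E d)).symm ∘ (fderiv ℝ f) := rfl
  have h2 : ‖iteratedFDeriv ℝ 2 f x‖ = ‖fderiv ℝ (fderiv ℝ f) x‖ := by
    rw [← norm_iteratedFDeriv_fderiv (n := 1), norm_iteratedFDeriv_one]
  rw [h1, h2, LinearIsometryEquiv.comp_fderiv]
  refine ContinuousLinearMap.opNorm_le_bound _ (ContinuousLinearMap.opNorm_nonneg _) fun v => ?_
  simp only [ContinuousLinearMap.comp_apply]
  refine le_trans (le_of_eq ?_) (ContinuousLinearMap.le_opNorm _ v)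
  exact (InnerProductSpace.toDual ℝ (E d)).symm.norm_map _

theorem P0_symB {d : ℕ} {μ ν : ℝ} {a : Fin d → Fin d → E d → ℝ} {VL VS : E d → ℝ}
    (h : AssumptionC μ ν a VL VS) (M : ℝ) : SymB μ M (P0 a) := by
  obtain ⟨h1, -, -, h4, -⟩ := h
  refine SymB.sum _ _ fun m => SymB.sum _ _ fun n => ?_
  obtain ⟨C0, hC0, hb0⟩ := h4 m n 0
  obtain ⟨C1, hC1, hb1⟩ := h4 m n 1
  have hc : ContDiff ℝ (⊤ : ℕ∞) (bco a m n) := (h1 m n).sub contDiff_const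
  have hc1 : ContDiff ℝ 1 (bco a m n) := hc.of_le (by exact_mod_cast le_top)
  refine SymB.term (fun ξ : E d => ξ n)
    (fun x => bco a m n x • EuclideanSpace.single m (1:ℝ)) ?_ ?_ C0 C1 ?_ ?_
  · fun_prop
  · exact hc1.smul contDiff_const
  · intro x
    have := hb0 x
    rw [norm_iteratedFDeriv_zero] at this
    rw [norm_smul]
    simpa [bco] using this
  · intro x
    have := hb1 x
    rw [norm_iteratedFDeriv_one] at this
    rw [fderiv_smul_const (hc1.differentiable one_ne_zero x), ContinuousLinearMap.norm_smulRight_apply]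
    simp only [PiLp.norm_single, norm_one, mul_one]
    refine this.trans (le_of_eq ?_)
    congr 2; push_cast; ring

theorem Q0_symB {d : ℕ} {μ ν : ℝ} {a : Fin d → Fin d → E d → ℝ} {VL VS : E d → ℝ}
    (h : AssumptionC μ ν a VL VS) (M : ℝ) : SymB (1 + μ) M (Q0 a) := by
  obtain ⟨h1, -, -, h4, -⟩ := h
  refine SymB.sum _ _ fun m => SymB.sum _ _ fun n => ?_
  obtain ⟨C0, hC0, hb0⟩ := h4 m n 1
  obtain ⟨C1, hC1, hb1⟩ := h4 m n 2
  have hc : ContDiff ℝ (⊤ : ℕ∞) (bco a m n) := (h1 m n).sub contDiff_const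
  refine SymB.term (fun ξ : E d => (1 / 2) * (ξ m * ξ n)) (gradient (bco a m n)) ?_ ?_ C0 C1 ?_ ?_
  · fun_prop
  · exact contDiff_gradient _ hc
  · intro x
    rw [norm_gradient_eq]
    refine (hb0 x).trans (le_of_eq ?_)
    congr 2; push_cast; ring
  · intro x
    refine (norm_fderiv_gradient_le _ _).trans ((hb1 x).trans (le_of_eq ?_))
    congr 2; push_cast; ring


theorem P0_smul {d : ℕ} (a : Fin d → Fin d → E d → ℝ) (x ξ : E d) (c : ℝ) :
    P0 a (x, c • ξ) = c • P0 a (x, ξ) := by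
  simp only [P0, Finset.smul_sum, smul_smul, PiLp.smul_apply, smul_eq_mul, mul_assoc]

theorem Q0_smul {d : ℕ} (a : Fin d → Fin d → E d → ℝ) (x ξ : E d) (c : ℝ) :
    Q0 a (x, c • ξ) = c ^ 2 • Q0 a (x, ξ) := by
  simp only [Q0, Finset.smul_sum, smul_smul, PiLp.smul_apply, smul_eq_mul]
  refine Finset.sum_congr rfl fun m _ => Finset.sum_congr rfl fun n _ => ?_
  congr 1; ring

theorem kk_hasFDerivAt {d : ℕ} (a : Fin d → Fin d → E d → ℝ)
    (ha : ∀ m n, ContDiff ℝ (⊤ : ℕ∞) (a m n)) (hs : ∀ m n x, a m n x = a n m x) (x ξ : E d) :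
    HasFDerivAt (fun z : E d × E d => kk a z.1 z.2)
      ((innerSL ℝ (Q0 a (x, ξ))).comp (ContinuousLinearMap.fst ℝ (E d) (E d))
        + (innerSL ℝ (ξ + P0 a (x, ξ))).comp (ContinuousLinearMap.snd ℝ (E d) (E d))) (x, ξ) := by
  have hda : ∀ m n, HasFDerivAt (a m n) (fderiv ℝ (a m n) x) x := fun m n =>
    ((ha m n).differentiable (by simp) x).hasFDerivAt
  have h1 : ∀ m n, HasFDerivAt (fun z : E d × E d => a m n z.1)
      ((fderiv ℝ (a m n) x).comp (ContinuousLinearMap.fst ℝ (E d) (E d))) (x, ξ) := fun m n =>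
    HasFDerivAt.comp (x, ξ) (hda m n) hasFDerivAt_fst
  have h2 : ∀ m, HasFDerivAt (fun z : E d × E d => z.2 m)
      ((EuclideanSpace.proj m : E d →L[ℝ] ℝ).comp (ContinuousLinearMap.snd ℝ (E d) (E d))) (x, ξ) :=
    fun m => HasFDerivAt.comp (x, ξ) (EuclideanSpace.proj m : E d →L[ℝ] ℝ).hasFDerivAt
      hasFDerivAt_snd
  have h3 := (HasFDerivAt.fun_sum (u := Finset.univ) fun m _ =>
    HasFDerivAt.fun_sum (u := Finset.univ) fun n _ =>
    ((h1 m n).fun_mul (h2 m)).fun_mul (h2 n)).const_mul (1 / 2 : ℝ)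
  refine h3.congr_fderiv ?_
  have hg : ∀ m n v, inner ℝ (gradient (bco a m n) x) v = fderiv ℝ (a m n) x v := by
    intro m n v
    rw [gradient, InnerProductSpace.toDual_symm_apply]
    congr 1
    unfold bco
    rw [fderiv_sub_const]
  refine ContinuousLinearMap.ext fun z => ?_
  obtain ⟨v, w⟩ := z
  have hP : inner ℝ (ξ + P0 a (x, ξ)) w = ∑ m, ∑ n, a m n x * w m * ξ n := by
    rw [inner_add_left, P0, sum_inner]
    simp_rw [sum_inner, inner_smul_left, EuclideanSpace.inner_single_left]
    have : inner ℝ ξ w = ∑ m, ∑ n, (if m = n then (1:ℝ) else 0) * w m * ξ n := by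
      simp [PiLp.inner_apply]
    rw [this, ← Finset.sum_add_distrib]
    refine Finset.sum_congr rfl fun m _ => ?_
    rw [← Finset.sum_add_distrib]
    refine Finset.sum_congr rfl fun n _ => ?_
    by_cases hmn : m = n
    · simp [bco, hmn]; ring
    · simp [bco, hmn]; ring
  have hQ : inner ℝ (Q0 a (x, ξ)) v = ∑ m, ∑ n, (1 / 2) * (ξ m * ξ n) * fderiv ℝ (a m n) x v := by
    rw [Q0, sum_inner]
    simp_rw [sum_inner, inner_smul_left, hg]
    simp
  have hsw : ∑ m, ∑ n, a m n x * w n * ξ m = ∑ m, ∑ n, a m n x * w m * ξ n := by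
    rw [Finset.sum_comm]
    refine Finset.sum_congr rfl fun m _ => Finset.sum_congr rfl fun n _ => ?_
    rw [hs]
  have hh : ∑ m, ∑ n, a m n x * w m * ξ n
      = (1 / 2) * ∑ m, ∑ n, (a m n x * w n * ξ m + a m n x * w m * ξ n) := by
    simp_rw [Finset.sum_add_distrib]
    rw [hsw]; ring
  simp only [add_apply, smul_apply, sum_apply, ContinuousLinearMap.comp_apply,
    ContinuousLinearMap.coe_fst', ContinuousLinearMap.coe_snd', innerSL_apply_apply, hP, hQ, hh,
    Finset.mul_sum, ← Finset.sum_add_distrib]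
  rw [smul_eq_mul, Finset.mul_sum]
  refine Finset.sum_congr rfl fun m _ => ?_
  rw [Finset.mul_sum]
  refine Finset.sum_congr rfl fun n _ => ?_
  have hproj : ∀ (n : Fin d) (w : E d), (EuclideanSpace.proj n : E d →L[ℝ] ℝ) w = w n := fun _ _ => rfl
  simp only [smul_eq_mul, hproj]
  ring

theorem hasGradientAt_of_fderiv {d : ℕ} {f : E d → ℝ} {g x : E d}
    {f' : E d →L[ℝ] ℝ} (h : HasFDerivAt f f' x) (h2 : ∀ v, f' v = inner ℝ g v) :
    HasGradientAt f g x := by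
  rw [hasGradientAt_iff_hasFDerivAt]
  refine h.congr_fderiv (ContinuousLinearMap.ext fun v => ?_)
  rw [h2 v, InnerProductSpace.toDual_apply_apply]

theorem kk_grad_xi {d : ℕ} (a : Fin d → Fin d → E d → ℝ)
    (ha : ∀ m n, ContDiff ℝ (⊤ : ℕ∞) (a m n)) (hs : ∀ m n x, a m n x = a n m x) (x ξ : E d) :
    HasGradientAt (kk a x) (ξ + P0 a (x, ξ)) ξ := by
  have h := HasFDerivAt.comp (f := fun e : E d => (x, e)) (g := fun z : E d × E d => kk a z.1 z.2) ξ
    (kk_hasFDerivAt a ha hs x ξ) (hasFDerivAt_prodMk_right x ξ)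
  exact hasGradientAt_of_fderiv h fun v => by simp [inner_add_left]

theorem kk_grad_x {d : ℕ} (a : Fin d → Fin d → E d → ℝ)
    (ha : ∀ m n, ContDiff ℝ (⊤ : ℕ∞) (a m n)) (hs : ∀ m n x, a m n x = a n m x) (x ξ : E d) :
    HasGradientAt (fun x => kk a x ξ) (Q0 a (x, ξ)) x := by
  have h := HasFDerivAt.comp (f := fun e : E d => (e, ξ)) (g := fun z : E d × E d => kk a z.1 z.2) x
    (kk_hasFDerivAt a ha hs x ξ) (hasFDerivAt_prodMk_left x ξ)
  exact hasGradientAt_of_fderiv h fun v => by simp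

/-- explicit form of the modified phase gradient -/
def W {d : ℕ} (a : Fin d → Fin d → E d → ℝ) (VL : E d → ℝ) (ε τ : ℝ) (η : E d) : E d :=
  τ • η + τ • ∫ u in (0:ℝ)..1, (P0 a ((u * τ) • η, η)
    + (u * τ) • (Q0 a ((u * τ) • η, η) + ε • gradient VL ((u * τ) • η)))

theorem gradient_Phi {d : ℕ} (a : Fin d → Fin d → E d → ℝ) (VL : E d → ℝ)
    (ha : ∀ m n, ContDiff ℝ (⊤ : ℕ∞) (a m n)) (hs : ∀ m n x, a m n x = a n m x)
    (hP : ContDiff ℝ 1 (P0 a)) (hQ : ContDiff ℝ 1 (Q0 a))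
    (hV : ContDiff ℝ (⊤ : ℕ∞) VL) (t : ℝ) (ξ : E d) :
    gradient (Phi a VL t) ξ = W a VL 1 t ξ := by
  have hPc := hP.continuous
  have hQc := hQ.continuous
  have hVc := (contDiff_gradient VL hV).continuous
  have hV0 := hV.continuous
  have hVd : ∀ x, HasGradientAt VL (gradient VL x) x := fun x =>
    (hV.differentiable (by simp) x).hasGradientAt
  set g : E d → ℝ → E d := fun ξ s => ξ + P0 a (s • ξ, ξ)
    + s • (Q0 a (s • ξ, ξ) + gradient VL (s • ξ)) with hg
  have hgc : Continuous (Function.uncurry g) := by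
    simp only [hg, Function.uncurry_def]; fun_prop
  have hkc : Continuous fun z : E d × E d => kk a z.1 z.2 :=
    continuous_iff_continuousAt.2 fun z => (kk_hasFDerivAt a ha hs z.1 z.2).continuousAt
  have hd : ∀ ξ s, HasFDerivAt (fun ξ => kk a (s • ξ) ξ + VL (s • ξ)) (innerSL ℝ (g ξ s)) ξ := by
    intro ξ s
    have h0 : HasFDerivAt (fun ξ : E d => s • ξ) (s • ContinuousLinearMap.id ℝ (E d)) ξ :=
      (hasFDerivAt_id ξ).const_smul s
    have h1 := HasFDerivAt.comp (f := fun ξ : E d => (s • ξ, ξ))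
      (g := fun z : E d × E d => kk a z.1 z.2) ξ (kk_hasFDerivAt a ha hs (s • ξ) ξ) (h0.prodMk (hasFDerivAt_id ξ))
    have h2 := HasFDerivAt.comp ξ (hVd (s • ξ)).hasFDerivAt h0
    refine (h1.fun_add h2).congr_fderiv (ContinuousLinearMap.ext fun v => ?_)
    simp [hg, inner_add_left, inner_smul_left, inner_smul_right]
    ring
  have hI := aux_hasFDerivAt_integral (fun ξ s => kk a (s • ξ) ξ + VL (s • ξ))
    (fun ξ s => innerSL ℝ (g ξ s)) 0 t (by
      simp only [Function.uncurry_def]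
      exact (hkc.comp (by fun_prop : Continuous fun z : E d × ℝ => (z.2 • z.1, z.1))).add
        (by fun_prop)) (by
      simp only [Function.uncurry_def]
      exact (innerSL ℝ).continuous.comp hgc) hd ξ
  have hgξ : Continuous (g ξ) := hgc.comp (by fun_prop : Continuous fun u => (ξ, u))
  have hG : HasGradientAt (Phi a VL t) (∫ s in (0:ℝ)..t, g ξ s) ξ := by
    refine hasGradientAt_of_fderiv hI fun v => ?_
    have := ContinuousLinearMap.intervalIntegral_comp_comm (innerSL ℝ : E d →L⋆[ℝ] E d →L[ℝ] ℝ)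
      (hgξ.intervalIntegrable (μ := volume) 0 t)
    rw [this]; rfl
  rw [hG.gradient]
  have e1 : ∫ s in (0:ℝ)..t, g ξ s = t • ∫ u in (0:ℝ)..1, g ξ (u * t) := by
    rw [intervalIntegral.smul_integral_comp_mul_right]
    simp
  rw [e1, W, ← smul_add]
  congr 1
  have : ∀ u : ℝ, g ξ (u * t) = ξ + (P0 a ((u * t) • ξ, ξ)
    + (u * t) • (Q0 a ((u * t) • ξ, ξ) + (1:ℝ) • gradient VL ((u * t) • ξ))) := by
    intro u; simp only [hg, one_smul]; abel
  simp_rw [this]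
  rw [intervalIntegral.integral_add]
  · simp
  · exact intervalIntegrable_const
  · exact Continuous.intervalIntegrable (by fun_prop) _ _

theorem W_scale {d : ℕ} (a : Fin d → Fin d → E d → ℝ) (VL : E d → ℝ) (l : ℝ) (hl : l ≠ 0)
    (τ : ℝ) (η : E d) : W a VL 1 (τ / l) (l • η) = W a VL ((l ^ 2)⁻¹) τ η := by
  unfold W
  congr 1
  · rw [smul_smul]; congr 1; field_simp
  · rw [← intervalIntegral.integral_smul, ← intervalIntegral.integral_smul]
    congr 1
    funext u
    have e : (u * (τ / l)) • l • η = (u * τ) • η := by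
      rw [smul_smul]; congr 1; field_simp
    rw [e, P0_smul, Q0_smul]
    simp only [smul_add, smul_smul]
    congr 1
    · congr 1; field_simp
    · congr 1
      · congr 1; field_simp
      · congr 1; field_simp

theorem Psi_eq {d : ℕ} (a : Fin d → Fin d → E d → ℝ) (t : ℝ) :
    Psi a t = Phi a (fun _ => 0) t := by
  funext ξ; simp [Psi, Phi]

theorem gradient_Psi {d : ℕ} (a : Fin d → Fin d → E d → ℝ) (VL : E d → ℝ)
    (ha : ∀ m n, ContDiff ℝ (⊤ : ℕ∞) (a m n)) (hs : ∀ m n x, a m n x = a n m x)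
    (hP : ContDiff ℝ 1 (P0 a)) (hQ : ContDiff ℝ 1 (Q0 a)) (t : ℝ) (ξ : E d) :
    gradient (Psi a t) ξ = W a VL 0 t ξ := by
  rw [Psi_eq, gradient_Phi a _ ha hs hP hQ contDiff_const]
  unfold W
  simp [gradient]

theorem W_continuous {d : ℕ} (a : Fin d → Fin d → E d → ℝ) (VL : E d → ℝ)
    (hP : Continuous (P0 a)) (hQ : Continuous (Q0 a)) (hV : Continuous (gradient VL)) (τ : ℝ) :
    Continuous fun z : ℝ × E d => W a VL z.1 τ z.2 := by
  unfold W
  refine Continuous.add (by fun_prop) (Continuous.const_smul ?_ τ)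
  apply intervalIntegral.continuous_parametric_intervalIntegral_of_continuous'
  simp only [Function.uncurry_def]
  fun_prop


theorem approx_tendsto {F : Type*} [NormedAddCommGroup F] [NormedSpace ℝ F] [ProperSpace F]
    (v w : F → F) (hv : ContDiff ℝ 1 v) (hw : Continuous w) (z : ℝ → F) (zl : ℝ → ℝ → F)
    (R B : ℝ) (hR : 0 ≤ R) (hz : ∀ s, HasDerivAt z (v (z s)) s)
    (hzl : ∀ᶠ l in atTop, (∀ s, HasDerivAt (zl l) (v (zl l s) + (l ^ 2)⁻¹ • w (zl l s)) s) ∧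
      zl l 0 = z 0 ∧ ∀ s, 0 ≤ s → s ≤ R → ‖zl l s‖ ≤ B) :
    Tendsto (fun l => zl l R) atTop (𝓝 (z R)) := by
  have hzc : Continuous z := continuous_iff_continuousAt.2 fun s => (hz s).continuousAt
  obtain ⟨B1, hB1⟩ := (isCompact_Icc (a := (0:ℝ)) (b := R)).exists_bound_of_continuousOn
    hzc.continuousOn
  set B2 := max B B1 with hB2
  have hcp : IsCompact (Metric.closedBall (0 : F) B2) := isCompact_closedBall _ _
  obtain ⟨K, hK⟩ := hv.contDiffOn.exists_lipschitzOnWith (s := Metric.closedBall (0 : F) B2)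
    one_ne_zero (convex_closedBall _ _) hcp
  obtain ⟨Cw, hCw⟩ := hcp.exists_bound_of_continuousOn hw.continuousOn
  have key : ∀ᶠ l in atTop, dist (zl l R) (z R) ≤ gronwallBound 0 K ((l ^ 2)⁻¹ * Cw + 0) (R - 0) := by
    filter_upwards [hzl] with l hl
    obtain ⟨h1, h2, h3⟩ := hl
    refine dist_le_of_approx_trajectories_ODE_of_mem (v := fun _ => v)
      (s := fun _ => Metric.closedBall (0 : F) B2) (fun t _ => hK)
      (continuous_iff_continuousAt.2 fun s => (h1 s).continuousAt).continuousOn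
      (fun t _ => (h1 t).hasDerivWithinAt) ?_ ?_ hzc.continuousOn
      (fun t _ => (hz t).hasDerivWithinAt) ?_ ?_ (by rw [h2, dist_self]) R ⟨hR, le_rfl⟩
    · intro t ht
      rw [dist_eq_norm, add_sub_cancel_left, norm_smul, Real.norm_of_nonneg (by positivity)]
      refine mul_le_mul_of_nonneg_left (hCw _ ?_) (by positivity)
      rw [mem_closedBall_zero_iff]
      exact (h3 t ht.1 ht.2.le).trans (le_max_left _ _)
    · intro t ht
      rw [mem_closedBall_zero_iff]
      exact (h3 t ht.1 ht.2.le).trans (le_max_left _ _)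
    · intro t _; rw [dist_self]
    · intro t ht
      rw [mem_closedBall_zero_iff]
      exact (hB1 t ⟨ht.1, ht.2.le⟩).trans (le_max_right _ _)
  have hlim : Tendsto (fun l : ℝ => (l ^ 2)⁻¹ * Cw + 0) atTop (𝓝 0) := by
    have : Tendsto (fun l : ℝ => (l ^ 2)⁻¹) atTop (𝓝 0) :=
      (tendsto_pow_atTop (by norm_num)).inv_tendsto_atTop
    simpa using this.mul_const Cw
  have h2 : Tendsto (fun l : ℝ => gronwallBound 0 K ((l ^ 2)⁻¹ * Cw + 0) (R - 0)) atTop (𝓝 0) := by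
    have := ((gronwallBound_continuous_ε 0 K (R - 0)).tendsto 0).comp hlim
    rwa [gronwallBound_ε0_δ0] at this
  rw [tendsto_iff_dist_tendsto_zero]
  exact squeeze_zero' (Eventually.of_forall fun _ => dist_nonneg) key h2

theorem AssumptionC.weaken {d : ℕ} {μ ν m : ℝ} {a : Fin d → Fin d → E d → ℝ} {VL VS : E d → ℝ}
    (h : AssumptionC μ ν a VL VS) (h1 : m ≤ μ) (h2 : 2 * m ≤ ν) :
    AssumptionC m (2 * m) a VL VS := by
  obtain ⟨p1, p2, p3, p4, p5, p6, p7, p8⟩ := h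
  refine ⟨p1, p2, p3, fun i n j => ?_, p5, p6, fun j => ?_, fun j => ?_⟩
  · obtain ⟨C, hC, hb⟩ := p4 i n j
    exact ⟨C, hC, fun x => (hb x).trans (mul_le_mul_of_nonneg_left
      (Real.rpow_le_rpow_of_exponent_le (jap_one_le x) (by linarith)) hC.le)⟩
  · obtain ⟨C, hC, hb⟩ := p7 j
    exact ⟨C, hC, fun x => (hb x).trans (mul_le_mul_of_nonneg_left
      (Real.rpow_le_rpow_of_exponent_le (jap_one_le x) (by linarith)) hC.le)⟩
  · obtain ⟨C, hC, hb⟩ := p8 j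
    exact ⟨C, hC, fun x => (hb x).trans (mul_le_mul_of_nonneg_left
      (Real.rpow_le_rpow_of_exponent_le (jap_one_le x) (by linarith)) hC.le)⟩

theorem ham_kk {d : ℕ} {a : Fin d → Fin d → E d → ℝ}
    (ha : ∀ m n, ContDiff ℝ (⊤ : ℕ∞) (a m n)) (hs : ∀ m n x, a m n x = a n m x)
    {y η : ℝ → E d} (h : IsHamiltonSol (kk a) y η) :
    (∀ s, HasDerivAt y (η s + P0 a (y s, η s)) s) ∧ ∀ s, HasDerivAt η (-Q0 a (y s, η s)) s := by
  refine ⟨fun s => ?_, fun s => ?_⟩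
  · have := (h s).1
    rwa [(kk_grad_xi a ha hs (y s) (η s)).gradient] at this
  · have := (h s).2
    rwa [(kk_grad_x a ha hs (y s) (η s)).gradient] at this

theorem ham_p {d : ℕ} {a : Fin d → Fin d → E d → ℝ} {VL VS : E d → ℝ}
    (ha : ∀ m n, ContDiff ℝ (⊤ : ℕ∞) (a m n)) (hs : ∀ m n x, a m n x = a n m x)
    (hL : ContDiff ℝ (⊤ : ℕ∞) VL) (hS : ContDiff ℝ (⊤ : ℕ∞) VS)
    {y η : ℝ → E d} (h : IsHamiltonSol (fun z ζ => kk a z ζ + (VL z + VS z)) y η) :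
    (∀ s, HasDerivAt y (η s + P0 a (y s, η s)) s) ∧
    ∀ s, HasDerivAt η (-(Q0 a (y s, η s) + (gradient VL (y s) + gradient VS (y s)))) s := by
  have hLd : ∀ x, HasGradientAt VL (gradient VL x) x := fun x =>
    (hL.differentiable (by simp) x).hasGradientAt
  have hSd : ∀ x, HasGradientAt VS (gradient VS x) x := fun x =>
    (hS.differentiable (by simp) x).hasGradientAt
  refine ⟨fun s => ?_, fun s => ?_⟩
  · have h1 := (h s).1
    have h2 : HasGradientAt (fun ζ => kk a (y s) ζ + (VL (y s) + VS (y s)))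
        (η s + P0 a (y s, η s)) (η s) :=
      (hasGradientAt_iff_hasFDerivAt.2
        ((kk_grad_xi a ha hs (y s) (η s)).hasFDerivAt.add_const _))
    rwa [h2.gradient] at h1
  · have h1 := (h s).2
    have h2 : HasGradientAt (fun x => kk a x (η s) + (VL x + VS x))
        (Q0 a (y s, η s) + (gradient VL (y s) + gradient VS (y s))) (y s) := by
      refine hasGradientAt_of_fderiv ((kk_grad_x a ha hs (y s) (η s)).hasFDerivAt.fun_add
        ((hLd (y s)).hasFDerivAt.fun_add (hSd (y s)).hasFDerivAt)) fun v => ?_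
      simp [inner_add_left]
    rwa [h2.gradient] at h1


theorem eps_bound {d : ℕ} (x : E d) (l B C e n : ℝ) (hl : 0 < l) (hB : 0 < B) (hC : 0 ≤ C)
    (h : jap x ≤ B * l) (hn : 0 ≤ n) (hb : n ≤ C * jap x ^ (2 - e)) :
    (l ^ 2)⁻¹ * n ≤ B ^ 2 * C * jap x ^ (-e) := by
  have hj := jap_pos x
  have h1 : (l ^ 2)⁻¹ ≤ B ^ 2 * jap x ^ (-2 : ℝ) := by
    rw [Real.rpow_neg hj.le, Real.rpow_two]
    rw [inv_le_iff_one_le_mul₀ (by positivity), mul_assoc, mul_comm, mul_assoc, ← div_eq_inv_mul,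
      le_div_iff₀ (by positivity), one_mul]
    calc jap x ^ 2 ≤ (B * l) ^ 2 := by gcongr
      _ = _ := by ring
  calc (l ^ 2)⁻¹ * n ≤ (B ^ 2 * jap x ^ (-2 : ℝ)) * (C * jap x ^ (2 - e)) := by gcongr
    _ = B ^ 2 * C * (jap x ^ (-2 : ℝ) * jap x ^ (2 - e)) := by ring
    _ = _ := by rw [← Real.rpow_add hj]; congr 2; ring

theorem growth {d : ℕ} {a : Fin d → Fin d → E d → ℝ} (m M C : ℝ) (hm : 0 ≤ m) (hC : 0 < C)
    (hP : ∀ x ξ, ‖ξ‖ ≤ M → ‖P0 a (x, ξ)‖ ≤ C * jap x ^ (-m)) (y η : ℝ → E d) (L : ℝ)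
    (hy : ∀ s, HasDerivAt y (η s + P0 a (y s, η s)) s)
    (hη : ∀ s, 0 ≤ s → s ≤ L → ‖η s‖ ≤ M) (s : ℝ) (h0 : 0 ≤ s) (hL : s ≤ L) :
    ‖y s‖ ≤ ‖y 0‖ + (M + C) * s := by
  have h := norm_image_sub_le_of_norm_deriv_le_segment' (f := y) (a := 0) (b := s) (C := M + C)
    (fun t _ => (hy t).hasDerivWithinAt) (fun t ht => by
      have h1 := hη t ht.1 (ht.2.le.trans hL)
      have h2 := hP (y t) (η t) h1
      have h3 : jap (y t) ^ (-m) ≤ 1 :=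
        Real.rpow_le_one_of_one_le_of_nonpos (jap_one_le _) (by linarith)
      have h4 : C * jap (y t) ^ (-m) ≤ C * 1 := by gcongr
      exact (norm_add_le _ _).trans (by linarith)) s ⟨h0, le_rfl⟩
  have h5 := norm_le_norm_add_norm_sub' (y s) (y 0)
  rw [sub_zero] at h
  linarith

theorem jap_lower {d : ℕ} (x : E d) (c' C' s : ℝ) (hc' : 0 < c') (hC' : 0 < C') (hs : 0 ≤ s)
    (h : c' * s - C' ≤ ‖x‖) : c' / (1 + C' + c') * (1 + s) ≤ jap x := by
  have h1 := jap_one_le x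
  have h2 := norm_le_jap x
  rw [div_mul_eq_mul_div, div_le_iff₀ (by positivity)]
  nlinarith

set_option maxHeartbeats 1000000 in
theorem uniform_cauchy {d : ℕ} {m : ℝ} {a : Fin d → Fin d → E d → ℝ} {VL VS : E d → ℝ}
    (hm : 1 / 2 < m) (hm1 : m < 1) (hAC : AssumptionC m (2 * m) a VL VS)
    (T : ℝ) (hT : 0 < T) (x0 : E d)
    (c' C' M : ℝ) (hc' : 0 < c') (hC' : 0 < C') (hM : 0 < M) :
    ∃ R0 ≥ (1:ℝ), ∃ D ≥ (0:ℝ), ∀ l : ℝ, 1 ≤ l → ∀ Y N : ℝ → E d,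
      (∀ s, HasDerivAt Y (N s + P0 a (Y s, N s)) s) →
      (∀ s, HasDerivAt N (-(Q0 a (Y s, N s) + (l ^ 2)⁻¹ • (gradient VL (Y s) + gradient VS (Y s)))) s)
      → Y 0 = x0 →
      (∀ s, 0 ≤ s → s ≤ l * T → c' * s - C' ≤ ‖Y s‖ ∧ ‖N s‖ ≤ M) →
      ∀ r τ, R0 ≤ r → r ≤ τ → τ ≤ l * T →
        ‖(Y τ - W a VL ((l ^ 2)⁻¹) τ (N τ)) - (Y r - W a VL ((l ^ 2)⁻¹) r (N r))‖
          ≤ D * r ^ (1 - 2 * m) := by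
  obtain ⟨hPc, CP, hCP, bP⟩ := P0_symB hAC M
  obtain ⟨hQc, CQ, hCQ, bQ⟩ := Q0_symB hAC M
  obtain ⟨ha, hs, -, -, hL, hS, bL, bS⟩ := hAC
  obtain ⟨C1, hC1, b1⟩ := bL 1
  obtain ⟨C2, hC2, b2⟩ := bL 2
  obtain ⟨C3, hC3, b3⟩ := bS 1
  have hLc := contDiff_gradient VL hL
  have hSc := contDiff_gradient VS hS
  set B := 1 + ‖x0‖ + (M + CP) * T + T * M with hB
  have hBp : 0 < B := by positivity
  set C := CP + CQ + B ^ 2 * C1 + B ^ 2 * C2 + B ^ 2 * C3 with hC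
  have hCpos : 0 < C := by positivity
  have e1 : CP ≤ C := by have : 0 ≤ CQ + B ^ 2 * C1 + B ^ 2 * C2 + B ^ 2 * C3 := by positivity
                         linarith
  have e2 : CQ + B ^ 2 * C1 ≤ C := by
    have : 0 ≤ CP + B ^ 2 * C2 + B ^ 2 * C3 := by positivity
    linarith
  have e3 : CQ + B ^ 2 * C2 ≤ C := by
    have : 0 ≤ CP + B ^ 2 * C1 + B ^ 2 * C3 := by positivity
    linarith
  have e4 : B ^ 2 * C3 ≤ C := by
    have : 0 ≤ CP + CQ + B ^ 2 * C1 + B ^ 2 * C2 := by positivity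
    linarith
  have e5 : CQ ≤ C := by
    have : 0 ≤ B ^ 2 * C1 := by positivity
    linarith
  obtain ⟨R0, hR0, D, hD, key⟩ := key_lemma (d := d) m M C (c' / (1 + C' + c')) ‖x0‖ hm hm1 hCpos
    (by positivity) (norm_nonneg _)
  refine ⟨R0, hR0, D, hD, ?_⟩
  intro l hl Y N hY hN hY0 hbd r τ hr hrτ hτ
  have hl0 : 0 < l := by linarith
  set ε := (l ^ 2)⁻¹ with hε
  have hε0 : 0 ≤ ε := by positivity
  set ρ := (B - 1) * l with hρ
  have hjap : ∀ x : E d, ‖x‖ ≤ ρ → jap x ≤ B * l := fun x hx => by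
    have := jap_le x
    linarith
  have hYc : Continuous Y := continuous_iff_continuousAt.2 fun s => (hY s).continuousAt
  have hgr := growth m M CP (by linarith) hCP (fun x ξ h => (bP x ξ h).1) Y N (l * T) hY
    (fun s h0 h1 => (hbd s h0 h1).2)
  have hx0n := norm_nonneg x0
  have hYρ : ∀ s, 0 ≤ s → s ≤ l * T → ‖Y s‖ ≤ ρ := by
    intro s h0 h1
    have h2 := hgr s h0 h1
    rw [hY0] at h2
    have h3 : (M + CP) * s ≤ (M + CP) * (l * T) := by gcongr
    have h4 : ‖x0‖ ≤ ‖x0‖ * l := by nlinarith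
    have h5 : 0 ≤ T * M * l := by positivity
    rw [hρ, hB]; linarith
  have main := key (P0 a) (fun z => Q0 a z + ε • gradient VL z.1) Y N
    (fun s => ε • gradient VS (Y s)) (l * T) ρ hPc
    (hQc.add ((hLc.comp contDiff_fst).const_smul ε))
    ((hSc.continuous.comp hYc).const_smul ε) ?_ hM ?_ ?_ ?_ ?_ hY ?_ ?_ (by rw [hY0]) r τ hr hrτ hτ
  · simp only [W, ← sub_sub]
    exact main
  · have : 0 ≤ (‖x0‖ + (M + CP) * T) * l := by positivity
    rw [hρ, hB]; linarith
  · intro x ξ _ h2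
    exact ((bP x ξ h2).1).trans (mul_le_mul_of_nonneg_right e1 (jap_rpow_pos x _).le)
  · intro x ξ h1 h2
    have h3 := (bQ x ξ h2).1
    have h4 := eps_bound x l B C1 (1 + m) ‖gradient VL x‖ hl0 hBp hC1.le (hjap x h1)
      (norm_nonneg _) (by
        rw [norm_gradient_eq]; convert b1 x using 3; push_cast; ring)
    have h5 := norm_add_le (Q0 a (x, ξ)) (ε • gradient VL x)
    rw [norm_smul, Real.norm_of_nonneg hε0] at h5
    have h6 := mul_le_mul_of_nonneg_right e2 (jap_rpow_pos x (-(1 + m))).le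
    simp only at *
    linarith
  · intro x ξ _ h2 v w
    refine ((bP x ξ h2).2 v w).trans (mul_le_mul_of_nonneg_right e1 ?_)
    have := (jap_rpow_pos x (-(1 + m))).le
    have := (jap_rpow_pos x (-m)).le
    positivity
  · intro x ξ h1 h2 v w
    have h3 := (bQ x ξ h2).2 v w
    have h4 := eps_bound x l B C2 (2 + m) ‖fderiv ℝ (gradient VL) x‖ hl0 hBp hC2.le (hjap x h1)
      (norm_nonneg _) ((norm_fderiv_gradient_le VL x).trans (by
        have := b2 x
        rwa [show 2 - m - ((2 : ℕ) : ℝ) = 2 - (2 + m) by push_cast; ring] at this))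
    have hd1 : HasFDerivAt (Q0 a) (fderiv ℝ (Q0 a) (x, ξ)) (x, ξ) :=
      (hQc.differentiable one_ne_zero _).hasFDerivAt
    have hd2 : HasFDerivAt (gradient VL) (fderiv ℝ (gradient VL) x) x :=
      (hLc.differentiable one_ne_zero _).hasFDerivAt
    have hd3 : HasFDerivAt (fun z : E d × E d => gradient VL z.1)
      ((fderiv ℝ (gradient VL) x).comp (ContinuousLinearMap.fst ℝ (E d) (E d))) (x, ξ) :=
      HasFDerivAt.comp (f := fun z : E d × E d => z.1) (g := gradient VL) (x, ξ) hd2 hasFDerivAt_fst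
    have hd4 := (hd1.fun_add (hd3.fun_const_smul ε)).fderiv
    rw [hd4]
    have h5 := norm_add_le (fderiv ℝ (Q0 a) (x, ξ) (v, w)) (ε • fderiv ℝ (gradient VL) x v)
    rw [norm_smul, Real.norm_of_nonneg hε0] at h5
    have h7 : ε * ‖fderiv ℝ (gradient VL) x v‖ ≤ (B ^ 2 * C2 * jap x ^ (-(2 + m))) * ‖v‖ :=
      calc ε * ‖fderiv ℝ (gradient VL) x v‖ ≤ ε * (‖fderiv ℝ (gradient VL) x‖ * ‖v‖) := by
            gcongr; exact ContinuousLinearMap.le_opNorm _ _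
        _ = (ε * ‖fderiv ℝ (gradient VL) x‖) * ‖v‖ := by ring
        _ ≤ _ := by gcongr
    have e : -(1 + (1 + m)) = -(2 + m) := by ring
    rw [e] at h3
    have p1 := mul_nonneg (jap_rpow_pos x (-(2 + m))).le (norm_nonneg v)
    have p2 := mul_nonneg (jap_rpow_pos x (-(1 + m))).le (norm_nonneg w)
    have q1 := mul_le_mul_of_nonneg_right e3 p1
    have q2 := mul_le_mul_of_nonneg_right e5 p2
    have h8 : ‖(fderiv ℝ (Q0 a) (x, ξ) + ε • (fderiv ℝ (gradient VL) x).comp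
        (ContinuousLinearMap.fst ℝ (E d) (E d))) (v, w)‖ =
        ‖fderiv ℝ (Q0 a) (x, ξ) (v, w) + ε • fderiv ℝ (gradient VL) x v‖ := rfl
    rw [h8]
    linarith
  · intro s
    convert hN s using 2
    simp only [smul_add]; abel
  · intro s h0 h1
    refine ⟨jap_lower _ c' C' s hc' hC' h0 (hbd s h0 h1).1, hYρ s h0 h1, (hbd s h0 h1).2, ?_⟩
    rw [norm_smul, Real.norm_of_nonneg hε0]
    refine (eps_bound (Y s) l B C3 (1 + 2 * m) _ hl0 hBp hC3.le (hjap _ (hYρ s h0 h1))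
      (norm_nonneg _) ?_).trans (mul_le_mul_of_nonneg_right e4 (jap_rpow_pos _ _).le)
    rw [norm_gradient_eq]; convert b3 (Y s) using 3; push_cast; ring


theorem half_rescaled {d : ℕ} {m : ℝ} {a : Fin d → Fin d → E d → ℝ} {VL VS : E d → ℝ}
    (hm : 1 / 2 < m) (hm1 : m < 1) (hAC : AssumptionC m (2 * m) a VL VS)
    (T : ℝ) (hT : 0 < T) (x0 ξ0 : E d) (y η : ℝ → E d)
    (hy : ∀ s, HasDerivAt y (η s + P0 a (y s, η s)) s)
    (hη : ∀ s, HasDerivAt η (-Q0 a (y s, η s)) s) (hy0 : y 0 = x0) (hη0 : η 0 = ξ0) (xp : E d)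
    (hxp : Tendsto (fun s => y s - W a VL 0 s (η s)) atTop (𝓝 xp))
    (Y N : ℝ → ℝ → E d) (lam0 c' C' M : ℝ) (hlam0 : 1 ≤ lam0) (hc' : 0 < c') (hC' : 0 < C')
    (hM : 0 < M)
    (hY : ∀ l, lam0 ≤ l → ∀ s, HasDerivAt (Y l) (N l s + P0 a (Y l s, N l s)) s)
    (hN : ∀ l, lam0 ≤ l → ∀ s, HasDerivAt (N l)
      (-(Q0 a (Y l s, N l s) + (l ^ 2)⁻¹ • (gradient VL (Y l s) + gradient VS (Y l s)))) s)
    (hY0 : ∀ l, lam0 ≤ l → Y l 0 = x0) (hN0 : ∀ l, lam0 ≤ l → N l 0 = ξ0)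
    (hbd : ∀ l, lam0 ≤ l → ∀ s, 0 ≤ s → s ≤ l * T → c' * s - C' ≤ ‖Y l s‖ ∧ ‖N l s‖ ≤ M)
    (t : ℝ) (ht : 0 < t) (htT : t ≤ T) :
    Tendsto (fun l => Y l (l * t) - W a VL ((l ^ 2)⁻¹) (l * t) (N l (l * t))) atTop (𝓝 xp) := by
  obtain ⟨R0, hR0, D, hD, hUC⟩ := uniform_cauchy hm hm1 hAC T hT x0 c' C' M hc' hC' hM
  obtain ⟨hPc, CP, hCP, bP⟩ := P0_symB hAC M
  have hQc := (Q0_symB hAC M).1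
  obtain ⟨-, -, -, -, hL, hS, -, -⟩ := hAC
  have hLc := (contDiff_gradient VL hL).continuous
  have hSc := (contDiff_gradient VS hS).continuous
  have hPc' := hPc.continuous
  have hQc' := hQc.continuous
  -- convergence at a fixed time
  have conv : ∀ R, 0 ≤ R → Tendsto (fun l => Y l R - W a VL ((l ^ 2)⁻¹) R (N l R)) atTop
      (𝓝 (y R - W a VL 0 R (η R))) := by
    intro R hR
    have h := approx_tendsto (F := E d × E d) (fun z => (z.2 + P0 a z, -Q0 a z))
      (fun z => (0, -(gradient VL z.1 + gradient VS z.1)))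
      ((contDiff_snd.add hPc).prodMk hQc.neg) (by fun_prop) (fun s => (y s, η s))
      (fun l s => (Y l s, N l s)) R (max (‖x0‖ + (M + CP) * R) M) hR
      (fun s => (hy s).prodMk (hη s)) (by
        filter_upwards [eventually_ge_atTop lam0, eventually_ge_atTop (R / T)] with l hl hlR
        have hlT : R ≤ l * T := by rwa [div_le_iff₀ hT] at hlR
        refine ⟨fun s => ?_, ?_, fun s h0 h1 => ?_⟩
        · refine ((hY l hl s).prodMk (hN l hl s)).congr_deriv ?_
          ext1
          · simp
          · simp only [Prod.snd_add, Prod.smul_snd, smul_neg, neg_add, smul_add]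
        · rw [hY0 l hl, hN0 l hl, hy0, hη0]
        · have hg := growth m M CP (by linarith) hCP (fun x ξ h => (bP x ξ h).1) (Y l) (N l)
            (l * T) (hY l hl) (fun s h0 h1 => (hbd l hl s h0 h1).2) s h0 (h1.trans hlT)
          have h3 : (M + CP) * s ≤ (M + CP) * R := by gcongr
          rw [hY0 l hl] at hg
          rw [Prod.norm_mk]
          exact max_le_max (by linarith) (hbd l hl s h0 (h1.trans hlT)).2)
    rw [nhds_prod_eq] at h
    have hYl : Tendsto (fun l => Y l R) atTop (𝓝 (y R)) := tendsto_fst.comp h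
    have hNl : Tendsto (fun l => N l R) atTop (𝓝 (η R)) := tendsto_snd.comp h
    have he : Tendsto (fun l : ℝ => (l ^ 2)⁻¹) atTop (𝓝 0) :=
      (tendsto_pow_atTop (by norm_num)).inv_tendsto_atTop
    have hW := ((W_continuous a VL hPc' hQc' hLc R).tendsto (0, η R)).comp
      (he.prodMk_nhds hNl)
    exact hYl.sub hW
  rw [Metric.tendsto_atTop']
  intro e he
  have hp : Tendsto (fun r : ℝ => D * r ^ (1 - 2 * m)) atTop (𝓝 0) := by
    have := (tendsto_rpow_neg_atTop (y := 2 * m - 1) (by linarith)).const_mul D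
    simpa using this
  obtain ⟨R, hR1, hR2, hR3⟩ := ((hp.eventually (gt_mem_nhds (by positivity : (0:ℝ) < e / 3))).and
    ((Metric.tendsto_nhds.1 hxp (e / 3) (by positivity)).and (eventually_ge_atTop R0))).exists
  have hc := Metric.tendsto_nhds.1 (conv R (by linarith)) (e / 3) (by positivity)
  have hev : ∀ᶠ l in atTop, dist (Y l (l * t) - W a VL ((l ^ 2)⁻¹) (l * t) (N l (l * t))) xp < e := by
    filter_upwards [hc, eventually_ge_atTop lam0, eventually_ge_atTop (R / t)] with l h1 hl h2
    rw [div_le_iff₀ ht] at h2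
    have h3 := hUC l (by linarith) (Y l) (N l) (hY l hl) (hN l hl) (hY0 l hl) (hbd l hl) R (l * t)
      hR3 h2 (by have : 0 < l := by linarith
                 gcongr)
    rw [← dist_eq_norm] at h3
    have h4 := dist_triangle4 (Y l (l * t) - W a VL ((l ^ 2)⁻¹) (l * t) (N l (l * t)))
      (Y l R - W a VL ((l ^ 2)⁻¹) R (N l R)) (y R - W a VL 0 R (η R)) xp
    linarith
  obtain ⟨l0, hl0⟩ := eventually_atTop.1 hev
  exact ⟨l0, fun l hl => hl0 l hl.le⟩

theorem half_thm {d : ℕ} {m : ℝ} {a : Fin d → Fin d → E d → ℝ} {VL VS : E d → ℝ}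
    (hm : 1 / 2 < m) (hm1 : m < 1) (hAC : AssumptionC m (2 * m) a VL VS)
    (T : ℝ) (hT : 0 < T) (x0 ξ0 : E d) (y η : ℝ → E d)
    (hy : ∀ s, HasDerivAt y (η s + P0 a (y s, η s)) s)
    (hη : ∀ s, HasDerivAt η (-Q0 a (y s, η s)) s) (hy0 : y 0 = x0) (hη0 : η 0 = ξ0) (xp : E d)
    (hxp : Tendsto (fun s => y s - W a VL 0 s (η s)) atTop (𝓝 xp))
    (X Ξ : ℝ → ℝ → E d) (lam0 c' C' M : ℝ) (hlam0 : 1 ≤ lam0) (hc' : 0 < c') (hC' : 0 < C')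
    (hM : 0 < M)
    (hX : ∀ l, 1 ≤ l → ∀ s, HasDerivAt (X l) (Ξ l s + P0 a (X l s, Ξ l s)) s)
    (hΞ : ∀ l, 1 ≤ l → ∀ s, HasDerivAt (Ξ l)
      (-(Q0 a (X l s, Ξ l s) + (gradient VL (X l s) + gradient VS (X l s)))) s)
    (hX0 : ∀ l, 1 ≤ l → X l 0 = x0) (hΞ0 : ∀ l, 1 ≤ l → Ξ l 0 = l • ξ0)
    (hbd : ∀ l, lam0 ≤ l → ∀ s, 0 ≤ s → s ≤ T → c' * l * s - C' ≤ ‖X l s‖ ∧ ‖Ξ l s‖ ≤ M * l)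
    (t : ℝ) (ht : 0 < t) (htT : t ≤ T) :
    Tendsto (fun l => X l t - W a VL 1 t (Ξ l t)) atTop (𝓝 xp) := by
  have h := half_rescaled hm hm1 hAC T hT x0 ξ0 y η hy hη hy0 hη0 xp hxp
    (fun l s => X l (s / l)) (fun l s => l⁻¹ • Ξ l (s / l)) lam0 c' C' M hlam0 hc' hC' hM
    ?_ ?_ ?_ ?_ ?_ t ht htT
  · refine h.congr' ?_
    filter_upwards [eventually_ge_atTop 1] with l hl
    have hl0 : l ≠ 0 := by positivity
    have e : l * t / l = t := by field_simp
    simp only [e]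
    rw [← W_scale a VL l hl0, e, smul_smul, mul_inv_cancel₀ hl0, one_smul]
  · intro l hl s
    have hl1 : 1 ≤ l := hlam0.trans hl
    have hl0 : l ≠ 0 := by positivity
    have h1 := HasDerivAt.scomp s (hX l hl1 (s / l)) ((hasDerivAt_id s).div_const l)
    refine h1.congr_deriv ?_
    rw [P0_smul, smul_add, one_div]
  · intro l hl s
    have hl1 : 1 ≤ l := hlam0.trans hl
    have hl0 : l ≠ 0 := by positivity
    have h1 := (HasDerivAt.scomp s (hΞ l hl1 (s / l)) ((hasDerivAt_id s).div_const l)).const_smul l⁻¹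
    refine h1.congr_deriv ?_
    rw [Q0_smul, one_div, smul_smul, smul_neg, smul_add, ← inv_pow, sq]
  · intro l hl
    simp [hX0 l (hlam0.trans hl)]
  · intro l hl
    have hl1 : 1 ≤ l := hlam0.trans hl
    have hl0 : l ≠ 0 := by positivity
    simp [hΞ0 l hl1, smul_smul, hl0]
  · intro l hl s h0 h1
    have hl0 : 0 < l := by linarith
    have h2 := hbd l hl (s / l) (by positivity) (by rw [div_le_iff₀ hl0]; linarith)
    refine ⟨?_, ?_⟩
    · have := h2.1
      rwa [show c' * l * (s / l) = c' * s by field_simp] at this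
    · rw [norm_smul, norm_inv, Real.norm_of_nonneg hl0.le, inv_mul_le_iff₀ hl0]
      linarith [h2.2]

theorem W_neg {d : ℕ} (a : Fin d → Fin d → E d → ℝ) (VL : E d → ℝ) (ε τ : ℝ) (η : E d) :
    W a VL ε (-τ) (-η) = W a VL ε τ η := by
  unfold W
  rw [neg_smul_neg]
  congr 1
  rw [← intervalIntegral.integral_smul, ← intervalIntegral.integral_smul]
  congr 1
  funext u
  have e : (u * -τ) • (-η) = (u * τ) • η := by rw [mul_neg, neg_smul_neg]
  have e1 := P0_smul a ((u * τ) • η) η (-1)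
  have e2 := Q0_smul a ((u * τ) • η) η (-1)
  simp only [neg_smul, one_smul, neg_one_sq] at e1 e2
  rw [e, e1, e2]
  simp only [mul_neg, neg_smul, smul_add, smul_neg, neg_neg, neg_add]

/-- Theorem 6, high-energy asymptotics of the modified position. -/
theorem stmt10 (d : ℕ) (hd : 1 ≤ d) (μ ν : ℝ) (hμ : 1 / 2 < μ) (hμ1 : μ ≤ 1) (hν : 1 < ν)
    (a : Fin d → Fin d → E d → ℝ) (VL VS : E d → ℝ) (hAC : AssumptionC μ ν a VL VS)
    (T : ℝ) (hT : 0 < T) (x0 ξ0 : E d) (hξ0 : ξ0 ≠ 0)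
    (y η : ℝ → E d) (hyHam : IsHamiltonSol (kk a) y η) (hy0 : y 0 = x0) (hη0 : η 0 = ξ0)
    (c C : ℝ) (hc : 0 < c) (hC : 0 < C) (hnt : ∀ s : ℝ, c * |s| - C ≤ ‖y s‖)
    (xp xm : E d)
    (hxp : Tendsto (fun s => y s - gradient (Psi a s) (η s)) atTop (𝓝 xp))
    (hxm : Tendsto (fun s => y s - gradient (Psi a s) (η s)) atBot (𝓝 xm))
    (X Ξ : ℝ → ℝ → E d)
    (hXHam : ∀ l : ℝ, 1 ≤ l →
      IsHamiltonSol (fun z ζ => kk a z ζ + (VL z + VS z)) (X l) (Ξ l) ∧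
        X l 0 = x0 ∧ Ξ l 0 = l • ξ0)
    (lam0 c' C' M : ℝ) (hlam0 : 1 ≤ lam0) (hc' : 0 < c') (hC' : 0 < C') (hM : 0 < M)
    (hbd : ∀ l : ℝ, lam0 ≤ l → ∀ s : ℝ, |s| ≤ T →
      c' * l * |s| - C' ≤ ‖X l s‖ ∧ ‖Ξ l s‖ ≤ M * l) :
    (∀ t : ℝ, 0 < t → t ≤ T →
      Tendsto (fun l : ℝ => X l t - gradient (Phi a VL t) (Ξ l t)) atTop (𝓝 xp)) ∧
    (∀ t : ℝ, -T ≤ t → t < 0 →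
      Tendsto (fun l : ℝ => X l t - gradient (Phi a VL t) (Ξ l t)) atTop (𝓝 xm)) := by
  set m := min (min μ (ν / 2)) (3 / 4) with hm
  have hm1 : 1 / 2 < m := by
    rw [hm]; refine lt_min (lt_min hμ (by linarith)) (by norm_num)
  have hm2 : m < 1 := (min_le_right _ _).trans_lt (by norm_num)
  have hm3 : m ≤ μ := (min_le_left _ _).trans (min_le_left _ _)
  have hm4 : m ≤ ν / 2 := (min_le_left _ _).trans (min_le_right _ _)
  have hA := hAC.weaken hm3 (by linarith : 2 * m ≤ ν)
  have hP := (P0_symB hA 1).1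
  have hQ := (Q0_symB hA 1).1
  obtain ⟨ha, hs, -, -, hL, hS, -, -⟩ := id hA
  obtain ⟨hy, hη⟩ := ham_kk ha hs hyHam
  have hX := fun l hl => (ham_p ha hs hL hS (hXHam l hl).1).1
  have hΞ := fun l hl => (ham_p ha hs hL hS (hXHam l hl).1).2
  simp only [gradient_Psi a VL ha hs hP hQ] at hxp hxm
  simp only [gradient_Phi a VL ha hs hP hQ hL]
  have hPn : ∀ x ξ, P0 a (x, -ξ) = -P0 a (x, ξ) := fun x ξ => by
    have := P0_smul a x ξ (-1)
    simpa using this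
  have hQn : ∀ x ξ, Q0 a (x, -ξ) = Q0 a (x, ξ) := fun x ξ => by
    have := Q0_smul a x ξ (-1)
    simpa using this
  have hneg : ∀ s : ℝ, HasDerivAt (fun s : ℝ => -s) (-1) s := fun s => hasDerivAt_neg s
  refine ⟨fun t h0 h1 => ?_, fun t h0 h1 => ?_⟩
  · refine half_thm hm1 hm2 hA T hT x0 ξ0 y η hy hη hy0 hη0 xp hxp X Ξ lam0 c' C' M hlam0 hc' hC'
      hM hX hΞ (fun l hl => (hXHam l hl).2.1) (fun l hl => (hXHam l hl).2.2) ?_ t h0 h1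
    intro l hl s hs0 hs1
    have := hbd l hl s (by rwa [abs_of_nonneg hs0])
    rwa [abs_of_nonneg hs0] at this
  · have h := half_thm hm1 hm2 hA T hT x0 (-ξ0) (fun s => y (-s)) (fun s => -η (-s)) ?_ ?_
      (by simpa using hy0) (by simpa using hη0) xm ?_ (fun l s => X l (-s)) (fun l s => -Ξ l (-s))
      lam0 c' C' M hlam0 hc' hC' hM ?_ ?_ (fun l hl => by simpa using (hXHam l hl).2.1)
      (fun l hl => by simpa using (hXHam l hl).2.2) ?_ (-t) (by linarith) (by linarith)
    · refine h.congr fun l => ?_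
      rw [W_neg, neg_neg]
    · intro s
      refine (HasDerivAt.scomp s (hy (-s)) (hneg s)).congr_deriv ?_
      rw [hPn]; simp only [neg_smul, one_smul, neg_add]
    · intro s
      refine (HasDerivAt.scomp s (hη (-s)) (hneg s)).neg.congr_deriv ?_
      rw [hQn]; simp only [neg_smul, one_smul, neg_neg]
    · refine (hxm.comp tendsto_neg_atTop_atBot).congr fun s => ?_
      have := W_neg a VL 0 s (-η (-s))
      rw [neg_neg] at this
      simp only [Function.comp, this]
    · intro l hl s
      refine (HasDerivAt.scomp s (hX l hl (-s)) (hneg s)).congr_deriv ?_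
      rw [hPn]; simp only [neg_smul, one_smul, neg_add]
    · intro l hl s
      refine (HasDerivAt.scomp s (hΞ l hl (-s)) (hneg s)).neg.congr_deriv ?_
      rw [hQn]; simp only [neg_smul, one_smul, neg_neg]
    · intro l hl s hs0 hs1
      have := hbd l hl (-s) (by rwa [abs_neg, abs_of_nonneg hs0])
      rw [abs_neg, abs_of_nonneg hs0] at this
      simpa using this
end
end

section
/- (Lemma 8, the modified trajectory solves the Hamilton equations for the effective Hamiltonian ℓ) Assume Assumption C. Define ℓ(t;z,ξ) = p( z + ∇_ξΦ(t,ξ), ξ ) − p^{(L)}(tξ, ξ). Let (x,ξ) : ℝ → ℝ^d × ℝ^d solve the Hamilton equations for p with x(0) = x₀, ξ(0) = ξ₀, and set z(t) = x(t) − ∇_ξΦ(t, ξ(t)). Then z'(t) = (∂ℓ/∂ξ)(t; z(t), ξ(t)) and ξ'(t) = −(∂ℓ/∂z)(t; z(t), ξ(t)) for all t ∈ ℝ, with z(0) = x₀ and ξ(0) = ξ₀. -/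
open Filter MeasureTheory
open scoped Topology BigOperators

noncomputable section

/-- `p(x,ξ) = k(x,ξ) + V(x)` with `V = V^{(L)} + V^{(S)}`. -/
def pp {d : ℕ} (a : Fin d → Fin d → E d → ℝ) (VL VS : E d → ℝ) (x ξ : E d) : ℝ :=
  kk a x ξ + (VL x + VS x)

/-- `p^{(L)}(x,ξ) = k(x,ξ) + V^{(L)}(x)`. -/
def pLr {d : ℕ} (a : Fin d → Fin d → E d → ℝ) (VL : E d → ℝ) (x ξ : E d) : ℝ :=
  kk a x ξ + VL x

/-- The effective Hamiltonian `ℓ(t;z,ξ) = p(z + ∇_ξΦ(t,ξ), ξ) − p^{(L)}(tξ, ξ)`. -/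
def ell {d : ℕ} (a : Fin d → Fin d → E d → ℝ) (VL VS : E d → ℝ) (t : ℝ) (z ξ : E d) : ℝ :=
  pp a VL VS (z + gradient (Phi a VL t) ξ) ξ - pLr a VL (t • ξ) ξ

theorem aux_hasFDerivAt {W G : Type} [NormedAddCommGroup W] [NormedSpace ℝ W] [ProperSpace W]
    [NormedAddCommGroup G] [NormedSpace ℝ G] (F : W × ℝ → G) (hF : ContDiff ℝ 1 F) (w : W) :
    HasFDerivAt (fun w => ∫ s in (0:ℝ)..1, F (w, s))
      (∫ s in (0:ℝ)..1, (fderiv ℝ F (w, s)).comp (ContinuousLinearMap.inl ℝ W ℝ)) w := by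
  have hc : Continuous F := hF.continuous
  have hc' : Continuous (fun q : W × ℝ => (fderiv ℝ F q).comp (ContinuousLinearMap.inl ℝ W ℝ)) :=
    (hF.continuous_fderiv (by norm_num)).clm_comp continuous_const
  obtain ⟨C, hC⟩ := ((isCompact_closedBall w 1).prod (isCompact_Icc (a := (0:ℝ)) (b := 1))).exists_bound_of_continuousOn
    hc'.continuousOn
  refine intervalIntegral.hasFDerivAt_integral_of_dominated_of_fderiv_le
    (F' := fun w s => (fderiv ℝ F (w, s)).comp (ContinuousLinearMap.inl ℝ W ℝ))
    (bound := fun _ => C) (Metric.closedBall_mem_nhds w one_pos) ?_ ?_ ?_ ?_ ?_ ?_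
  · refine Eventually.of_forall fun x => ?_
    exact Continuous.aestronglyMeasurable (by fun_prop)
  · exact Continuous.intervalIntegrable (by fun_prop) _ _
  · exact Continuous.aestronglyMeasurable (hc'.comp (by fun_prop : Continuous fun s : ℝ => (w, s)))
  · refine Eventually.of_forall fun s hs x hx => hC (x, s) ⟨hx, ?_⟩
    rw [Set.uIoc_of_le zero_le_one] at hs
    exact ⟨hs.1.le, hs.2⟩
  · exact intervalIntegrable_const
  · refine Eventually.of_forall fun s hs x hx => ?_
    exact ((hF.differentiable (by norm_num)) (x, s)).hasFDerivAt.comp x (hasFDerivAt_prodMk_left x s)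

theorem aux_contDiff {W : Type} [NormedAddCommGroup W] [NormedSpace ℝ W] [ProperSpace W] (n : ℕ) :
    ∀ {G : Type} [NormedAddCommGroup G] [NormedSpace ℝ G] (F : W × ℝ → G),
      ContDiff ℝ (n + 1) F → ContDiff ℝ n (fun w => ∫ s in (0:ℝ)..1, F (w, s)) := by
  induction n with
  | zero =>
    intro G _ _ F hF
    rw [Nat.cast_zero, contDiff_zero]
    refine continuous_iff_continuousAt.2 fun w => (aux_hasFDerivAt F (by simpa using hF) w).continuousAt
  | succ n ih =>
    intro G _ _ F hF
    push_cast
    refine contDiff_succ_iff_hasFDerivAt.2 ⟨_, ih (fun q => (fderiv ℝ F q).comp (ContinuousLinearMap.inl ℝ W ℝ)) ?_, fun w => aux_hasFDerivAt F (hF.of_le (by simp)) w⟩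
    exact (hF.fderiv_right (m := n + 1) (by push_cast; exact le_rfl)).clm_comp contDiff_const

theorem aux_core {d : ℕ} (Ψ f : ℝ × E d → ℝ) (hΨ : ContDiff ℝ 2 Ψ) (hf : Differentiable ℝ f)
    (hΨf : ∀ w, fderiv ℝ Ψ w (1, 0) = f w)
    (P : E d × E d → ℝ) (hP : Differentiable ℝ P) (x ξ : ℝ → E d) (t : ℝ)
    (hx : HasDerivAt x (gradient (fun y => P (x t, y)) (ξ t)) t)
    (hξ : HasDerivAt ξ (-gradient (fun y => P (y, ξ t)) (x t)) t)
    (z : ℝ → E d) (hz : ∀ t : ℝ, z t = x t - gradient (fun y => Ψ (t, y)) (ξ t)) :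
    HasDerivAt z (gradient
        (fun y => P (z t + gradient (fun y => Ψ (t, y)) y, y) - f (t, y)) (ξ t)) t ∧
    HasDerivAt ξ (-gradient
        (fun y => P (y + gradient (fun y => Ψ (t, y)) (ξ t), ξ t) - f (t, ξ t)) (z t)) t := by
  set g : ℝ × E d → E d := fun w => gradient (fun y => Ψ (w.1, y)) w.2 with hg
  have hΨd : Differentiable ℝ Ψ := hΨ.differentiable (by norm_num)
  have hD : Differentiable ℝ (fderiv ℝ Ψ) :=
    (hΨ.fderiv_right (m := 1) (by norm_num)).differentiable (by norm_num)
  have hgeq : ∀ w, g w = (InnerProductSpace.toDual ℝ (E d)).symm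
      ((fderiv ℝ Ψ w).comp (ContinuousLinearMap.inr ℝ ℝ (E d))) := by
    intro w
    have h := ((hΨd w).hasFDerivAt (x := (w.1, w.2))).comp w.2 (hasFDerivAt_prodMk_right w.1 w.2)
    simp only [hg, gradient]
    congr 1
    exact h.fderiv
  have hgi : ∀ w v, inner ℝ (g w) v = fderiv ℝ Ψ w (0, v) := by
    intro w v
    rw [hgeq, InnerProductSpace.toDual_symm_apply]
    simp
  have hgd : Differentiable ℝ g := by
    have : g = fun w => (InnerProductSpace.toDual ℝ (E d)).symm
      ((fderiv ℝ Ψ w).comp (ContinuousLinearMap.inr ℝ ℝ (E d))) := funext hgeq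
    rw [this]
    refine (InnerProductSpace.toDual ℝ (E d)).symm.toContinuousLinearEquiv.differentiable.comp ?_
    exact hD.clm_comp (differentiable_const _)
  have hDg : ∀ w u v, inner ℝ (fderiv ℝ g w u) v = fderiv ℝ (fderiv ℝ Ψ) w u (0, v) := by
    intro w u v
    have h1 : HasFDerivAt (fun w => inner ℝ (g w) v) _ w :=
      (hgd w).hasFDerivAt.inner ℝ (hasFDerivAt_const v w)
    have h2 : HasFDerivAt (fun w => fderiv ℝ Ψ w (0, v)) _ w :=
      (hD w).hasFDerivAt.clm_apply (hasFDerivAt_const (0, v) w)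
    simp only [← hgi] at h2
    have := DFunLike.congr_fun (h1.unique h2) u
    simpa using this
  have hsymm : ∀ w u v, fderiv ℝ (fderiv ℝ Ψ) w u v = fderiv ℝ (fderiv ℝ Ψ) w v u := by
    intro w u v
    exact (hΨ.contDiffAt.isSymmSndFDerivAt (by simp)) u v
  have hft : ∀ w u, fderiv ℝ (fderiv ℝ Ψ) w u (1, 0) = fderiv ℝ f w u := by
    intro w u
    have h2 : HasFDerivAt (fun w => fderiv ℝ Ψ w (1, 0)) _ w :=
      (hD w).hasFDerivAt.clm_apply (hasFDerivAt_const ((1:ℝ), (0 : E d)) w)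
    simp only [hΨf] at h2
    have := DFunLike.congr_fun ((hf w).hasFDerivAt.unique h2) u
    simpa using this.symm
  have hzx : z t + g (t, ξ t) = x t := by rw [hz t]; simp [hg]
  constructor
  · have hz' : z = fun t => x t - g (t, ξ t) := funext hz
    have hgt : HasDerivAt (fun s => g (s, ξ s))
        (fderiv ℝ g (t, ξ t) (1, -gradient (fun y => P (y, ξ t)) (x t))) t :=
      HasFDerivAt.comp_hasDerivAt (l := g) (f := fun s => (s, ξ s)) t
        (hgd (t, ξ t)).hasFDerivAt ((hasDerivAt_id t).prodMk hξ)
    have hz1 := hx.sub hgt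
    rw [hz']
    refine hz1.congr_deriv ?_
    symm
    have hzt : x t - g (t, ξ t) = z t := (hz t).symm
    simp only [hzt]
    refine HasGradientAt.gradient ?_
    rw [hasGradientAt_iff_hasFDerivAt]
    have hin : HasFDerivAt (fun y => g (t, y)) _ (ξ t) :=
      ((hgd (t, ξ t)).hasFDerivAt).comp (ξ t) (hasFDerivAt_prodMk_right t (ξ t))
    have hpair := (hin.const_add (z t)).prodMk (hasFDerivAt_id (ξ t))
    have hPd : HasFDerivAt P (fderiv ℝ P (x t, ξ t)) (z t + g (t, ξ t), id (ξ t)) := by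
      rw [hzx]; exact (hP _).hasFDerivAt
    have hfin := ((hf (t, ξ t)).hasFDerivAt).comp (ξ t) (hasFDerivAt_prodMk_right t (ξ t))
    refine ((HasFDerivAt.comp (g := P) (f := fun y => (z t + g (t, y), id y)) (ξ t) hPd hpair).sub hfin).congr_fderiv ?_
    ext1 v
    have hP1 := HasFDerivAt.comp (g := P) (f := fun y => (y, ξ t)) (x t) (hP (x t, ξ t)).hasFDerivAt (hasFDerivAt_prodMk_left (x t) (ξ t))
    have hP2 := HasFDerivAt.comp (g := P) (f := fun y => (x t, y)) (ξ t) (hP (x t, ξ t)).hasFDerivAt (hasFDerivAt_prodMk_right (x t) (ξ t))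
    have e1 : ∀ u, inner ℝ (gradient (fun y => P (y, ξ t)) (x t)) u = fderiv ℝ P (x t, ξ t) (u, 0) := by
      intro u
      rw [inner_gradient_left]
      exact DFunLike.congr_fun hP1.fderiv u
    have e2 : ∀ u, inner ℝ (gradient (fun y => P (x t, y)) (ξ t)) u = fderiv ℝ P (x t, ξ t) (0, u) := by
      intro u
      rw [inner_gradient_left]
      exact DFunLike.congr_fun hP2.fderiv u
    set η := gradient (fun y => P (y, ξ t)) (x t) with hη
    have e3 : ∀ u v : E d, fderiv ℝ P (x t, ξ t) (u, v) =
        fderiv ℝ P (x t, ξ t) (u, 0) + fderiv ℝ P (x t, ξ t) (0, v) := by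
      intro u v
      rw [← map_add]; simp
    have e4 : ((1 : ℝ), -η) = (1, 0) - (0, η) := by simp
    have e5 : inner ℝ η (fderiv ℝ g (t, ξ t) (0, v)) = fderiv ℝ (fderiv ℝ Ψ) (t, ξ t) (0, η) (0, v) := by
      rw [real_inner_comm, hDg, hsymm]
    have e6 : inner ℝ (fderiv ℝ g (t, ξ t) (1, -η)) v
        = fderiv ℝ f (t, ξ t) (0, v) - fderiv ℝ (fderiv ℝ Ψ) (t, ξ t) (0, η) (0, v) := by
      rw [e4, map_sub, inner_sub_left, hDg, hDg, hsymm _ (1, 0), hft]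
    have e7 : (fderiv ℝ P (x t, ξ t)) (fderiv ℝ g (t, ξ t) (0, v), v) - fderiv ℝ f (t, ξ t) (0, v)
       = inner ℝ (gradient (fun y => P (x t, y)) (ξ t) - fderiv ℝ g (t, ξ t) (1, -η)) v := by
      rw [e3, ← e1, ← e2, inner_sub_left, e5, e6]; ring
    rw [inner_sub_left, inner_gradient_left] at e7
    simpa using e7
  · have : gradient (fun y => P (y + g (t, ξ t), ξ t) - f (t, ξ t)) (z t)
        = gradient (fun y => P (y, ξ t)) (x t) := by
      simp only [gradient]
      congr 1
      rw [fderiv_sub_const, fderiv_comp_add_right (f := fun y => P (y, ξ t)), hzx]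
    exact this ▸ hξ

theorem aux_kk {d : ℕ} (a : Fin d → Fin d → E d → ℝ) (ha : ∀ m n, ContDiff ℝ (⊤ : ℕ∞) (a m n))
    {X : Type} [NormedAddCommGroup X] [NormedSpace ℝ X] (u v : X → E d)
    (hu : ContDiff ℝ (⊤ : ℕ∞) u) (hv : ContDiff ℝ (⊤ : ℕ∞) v) :
    ContDiff ℝ (⊤ : ℕ∞) (fun q => kk a (u q) (v q)) := by
  unfold kk
  refine contDiff_const.mul (ContDiff.sum fun m _ => ContDiff.sum fun n _ => ?_)
  have hc : ∀ m, ContDiff ℝ (⊤ : ℕ∞) (fun q => v q m) := fun m => by fun_prop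
  exact (((ha m n).comp hu).mul (hc m)).mul (hc n)

/-- Lemma 8: the modified trajectory solves the Hamilton equations for `ℓ`. -/
theorem stmt15 (d : ℕ) (hd : 1 ≤ d) (μ ν : ℝ) (hμ : 1 / 2 < μ) (hμ1 : μ ≤ 1) (hν : 1 < ν)
    (a : Fin d → Fin d → E d → ℝ) (VL VS : E d → ℝ) (hAC : AssumptionC μ ν a VL VS)
    (x ξ : ℝ → E d) (x0 ξ0 : E d) (hx0 : x 0 = x0) (hξ0 : ξ 0 = ξ0)
    (hHam : IsHamiltonSol (pp a VL VS) x ξ)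
    (z : ℝ → E d) (hz : ∀ t : ℝ, z t = x t - gradient (Phi a VL t) (ξ t)) :
    (∀ t : ℝ,
      HasDerivAt z (gradient (fun ξ' => ell a VL VS t (z t) ξ') (ξ t)) t ∧
      HasDerivAt ξ (-gradient (fun z' => ell a VL VS t z' (ξ t)) (z t)) t) ∧
    z 0 = x0 ∧ ξ 0 = ξ0 := by
  obtain ⟨ha, -, -, -, hVL, hVS, -, -⟩ := hAC
  have hf : ContDiff ℝ (⊤ : ℕ∞) (fun w : ℝ × E d => pLr a VL (w.1 • w.2) w.2) := by
    unfold pLr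
    exact (aux_kk a ha _ _ (by fun_prop) (by fun_prop)).add (hVL.comp (by fun_prop))
  have hP : ContDiff ℝ (⊤ : ℕ∞) (fun w : E d × E d => pp a VL VS w.1 w.2) := by
    unfold pp
    exact (aux_kk a ha _ _ (by fun_prop) (by fun_prop)).add
      ((hVL.comp (by fun_prop)).add (hVS.comp (by fun_prop)))
  have hΨ : ContDiff ℝ 2 (fun w : ℝ × E d => Phi a VL w.1 w.2) := by
    have h := aux_contDiff 2 (fun q : (ℝ × E d) × ℝ =>
      q.1.1 * pLr a VL ((q.1.1 * q.2) • q.1.2) q.1.2) (by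
        have h1 : ContDiff ℝ (⊤ : ℕ∞) (fun q : (ℝ × E d) × ℝ => (q.1.1 * q.2, q.1.2)) := by fun_prop
        have h2 : ContDiff ℝ (⊤ : ℕ∞) (fun q : (ℝ × E d) × ℝ => q.1.1) := by fun_prop
        exact (h2.mul (hf.comp h1)).of_le (by norm_cast))
    refine (congrArg (ContDiff ℝ 2) (funext fun w => ?_)).mp h
    dsimp only
    rw [intervalIntegral.integral_const_mul]
    have := intervalIntegral.mul_integral_comp_mul_left (a := 0) (b := 1)
      (f := fun s => pLr a VL (s • w.2) w.2) w.1
    rw [this]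
    simp [Phi, pLr]
  have hΨf : ∀ w : ℝ × E d, fderiv ℝ (fun w : ℝ × E d => Phi a VL w.1 w.2) w (1, 0)
      = pLr a VL (w.1 • w.2) w.2 := by
    intro w
    have h1 : HasDerivAt (fun s => Phi a VL s w.2)
        (fderiv ℝ (fun w : ℝ × E d => Phi a VL w.1 w.2) w (1, 0)) w.1 :=
      HasFDerivAt.comp_hasDerivAt (l := fun w : ℝ × E d => Phi a VL w.1 w.2)
        (f := fun s => (s, w.2)) w.1 (hΨ.differentiable (by norm_num) w).hasFDerivAt
        ((hasDerivAt_id w.1).prodMk (hasDerivAt_const w.1 w.2))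
    have hc : Continuous (fun s : ℝ => pLr a VL (s • w.2) w.2) :=
      Continuous.comp (g := fun w : ℝ × E d => pLr a VL (w.1 • w.2) w.2)
        (f := fun s : ℝ => (s, w.2)) hf.continuous (by fun_prop)
    have h2 : HasDerivAt (fun s => Phi a VL s w.2) (pLr a VL (w.1 • w.2) w.2) w.1 :=
      (hc.integral_hasStrictDerivAt 0 w.1).hasDerivAt
    exact h1.unique h2
  refine ⟨fun t => ?_, ?_, hξ0⟩
  · exact aux_core (fun w : ℝ × E d => Phi a VL w.1 w.2) _ hΨ (hf.differentiable (by simp)) hΨf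
      (fun w : E d × E d => pp a VL VS w.1 w.2) (hP.differentiable (by simp)) x ξ t
      (hHam t).1 (hHam t).2 z hz
  · have : Phi a VL 0 = fun _ => 0 := by ext y; simp [Phi]
    rw [hz, this, gradient_fun_const, sub_zero, hx0]
end
end
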